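/- arXiv:2108.11825 — 3 statements merged into one kernel-verified Lean document; each statement's English description precedes it below -/
import Mathlib

section
/- Let λ ∈ ℝ and 0 < x₀ < π/2. Suppose g : ℝ → ℝ is twice continuously differentiable on [0, x₀], g(x) ≥ 0 for all x ∈ [0, x₀], g(x) > 0 for all x ∈ (0, x₀), and g''(x) + (λ / cos(x)²)·g(x) ≤ 0 for all x ∈ [0, x₀]. Suppose f : ℝ → ℝ is twice continuously differentiable on [0, x₀] and satisfies f''(x) + (λ / cos(x)²)·f(x) = 0 for all x ∈ [0, x₀], with f(0) = 0 and f'(0) = 1. Then f has no zero in the open interval (0, x₀), i.e. f(x) ≠ 0 for every x with 0 < x < x₀. -/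
/-! Let `W = g f' - g' f` be the Wronskian. As long as `f` stays nonnegative, `g'' + q g ≤ 0` and
`f'' + q f ≥ 0` give `W' = g f'' - g'' f ≥ 0`. Since `W = g f' ≥ 0` at the left endpoint, where `f`
vanishes, `(f / g)' = W / g² ≥ 0`. Hence at the first point `z` where `f` could fail to be positive,
`f z / g z` is at least an earlier, positive value of `f / g`. -/

open Set Filter Topology

theorem forall_mem_Ioo_lt_of_forall_Ioo_imp_lt {α β : Type*} [ConditionallyCompleteLinearOrder α]
    [TopologicalSpace α] [OrderTopology α] [LinearOrder β] [TopologicalSpace β]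
    [ClosedIicTopology β] {f : α → β} {a b : α} {c : β} (hf : ContinuousOn f (Ioo a b))
    (hfa : ∀ᶠ x in 𝓝[>] a, c < f x)
    (hstep : ∀ z ∈ Ioo a b, (∀ x ∈ Ioo a z, c < f x) → c < f z) :
    ∀ x ∈ Ioo a b, c < f x := by
  intro x hx
  by_contra! hfx
  obtain ⟨d, had : a < d, hd⟩ := (mem_nhdsGT_iff_exists_Ioo_subset' hx.1).1 hfa
  have hdx : d ≤ x := not_lt.1 fun hxd => (hd ⟨hx.1, hxd⟩).not_ge hfx
  have hcompact : IsCompact (Icc d x ∩ f ⁻¹' Iic c) :=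
    isCompact_Icc.of_isClosed_subset
      ((hf.mono (Icc_subset_Ioo had hx.2)).preimage_isClosed_of_isClosed isClosed_Icc isClosed_Iic)
      inter_subset_left
  obtain ⟨z, ⟨⟨hdz, hzx⟩, hfz⟩, hmin⟩ := hcompact.exists_isLeast ⟨x, ⟨hdx, le_rfl⟩, hfx⟩
  refine (hstep z ⟨had.trans_le hdz, hzx.trans_lt hx.2⟩ fun y hy => ?_).not_ge hfz
  rcases lt_or_ge y d with hyd | hdy
  · exact hd ⟨hy.1, hyd⟩
  · by_contra! hfy
    exact hy.2.not_ge (hmin ⟨⟨hdy, hy.2.le.trans hzx⟩, hfy⟩)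

/-- The Wronskian `g f' - g' f` of `g` and `f`, with derivatives taken within `s`, so that it is
meaningful at an endpoint of an interval `s` on which `g` and `f` are only one-sidedly smooth. -/
noncomputable def wronskianWithin {𝕜 : Type*} [NontriviallyNormedField 𝕜] (s : Set 𝕜)
    (g f : 𝕜 → 𝕜) (x : 𝕜) : 𝕜 :=
  g x * derivWithin f s x - derivWithin g s x * f x

section Wronskian

variable {𝕜 : Type*} [NontriviallyNormedField 𝕜] {s : Set 𝕜} {g f : 𝕜 → 𝕜} {x : 𝕜}

theorem continuousOn_wronskianWithin (hs : UniqueDiffOn 𝕜 s) (hg : ContDiffOn 𝕜 1 g s)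
    (hf : ContDiffOn 𝕜 1 f s) : ContinuousOn (wronskianWithin s g f) s :=
  (hg.continuousOn.mul (hf.continuousOn_derivWithin hs le_rfl)).sub
    ((hg.continuousOn_derivWithin hs le_rfl).mul hf.continuousOn)

theorem hasDerivAt_wronskianWithin (hs : s ∈ 𝓝 x) (hg : ContDiffAt 𝕜 2 g x)
    (hf : ContDiffAt 𝕜 2 f x) :
    HasDerivAt (wronskianWithin s g f) (g x * deriv (deriv f) x - deriv (deriv g) x * f x) x := by
  have hasDerivAt_fst {h : 𝕜 → 𝕜} (hh : ContDiffAt 𝕜 2 h x) : HasDerivAt h (deriv h x) x :=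
    (hh.differentiableAt two_ne_zero).hasDerivAt
  have hasDerivAt_snd {h : 𝕜 → 𝕜} (hh : ContDiffAt 𝕜 2 h x) :
      HasDerivAt (deriv h) (deriv (deriv h) x) x :=
    ((hh.derivWithin (m := 1) le_rfl).differentiableAt one_ne_zero).hasDerivAt
  have eq_deriv : wronskianWithin s g f =ᶠ[𝓝 x] fun y => g y * deriv f y - deriv g y * f y := by
    filter_upwards [eventually_mem_nhds_iff.2 hs] with y hy
    simp only [wronskianWithin, derivWithin_of_mem_nhds hy]
  refine HasDerivAt.congr_of_eventuallyEq ?_ eq_deriv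
  exact (((hasDerivAt_fst hg).mul (hasDerivAt_snd hf)).sub
    ((hasDerivAt_snd hg).mul (hasDerivAt_fst hf))).congr_deriv (by ring)

theorem hasDerivWithinAt_div_eq_wronskianWithin (hg : DifferentiableWithinAt 𝕜 g s x)
    (hf : DifferentiableWithinAt 𝕜 f s x) (hgx : g x ≠ 0) :
    HasDerivWithinAt (fun y => f y / g y) (wronskianWithin s g f x / g x ^ 2) s x :=
  (hf.hasDerivWithinAt.div hg.hasDerivWithinAt hgx).congr_deriv
    (by rw [wronskianWithin]; ring)

end Wronskian

section Real

variable {s t : Set ℝ} {q g f : ℝ → ℝ} {a b : ℝ}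

theorem monotoneOn_wronskianWithin (hs : UniqueDiffOn ℝ s) (ht : Convex ℝ t) (hts : t ⊆ s)
    (hg : ContDiffOn ℝ 2 g s) (hf : ContDiffOn ℝ 2 f s)
    (hg_nonneg : ∀ x ∈ interior t, 0 ≤ g x) (hf_nonneg : ∀ x ∈ interior t, 0 ≤ f x)
    (hg_ineq : ∀ x ∈ interior t, deriv (deriv g) x + q x * g x ≤ 0)
    (hf_ineq : ∀ x ∈ interior t, 0 ≤ deriv (deriv f) x + q x * f x) :
    MonotoneOn (wronskianWithin s g f) t := by
  refine monotoneOn_of_hasDerivWithinAt_nonneg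
    (f' := fun x => g x * deriv (deriv f) x - deriv (deriv g) x * f x) ht
    ((continuousOn_wronskianWithin hs (hg.of_le one_le_two) (hf.of_le one_le_two)).mono hts)
    (fun x hx => ?_) (fun x hx => ?_)
  · have hsx : s ∈ 𝓝 x := mem_interior_iff_mem_nhds.1 (interior_mono hts hx)
    exact (hasDerivAt_wronskianWithin hsx (hg.contDiffAt hsx)
      (hf.contDiffAt hsx)).hasDerivWithinAt
  · calc 0 ≤ g x * (deriv (deriv f) x + q x * f x) - (deriv (deriv g) x + q x * g x) * f x :=
          sub_nonneg.2 <| (mul_nonpos_of_nonpos_of_nonneg (hg_ineq x hx) (hf_nonneg x hx)).trans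
            (mul_nonneg (hg_nonneg x hx) (hf_ineq x hx))
      _ = g x * deriv (deriv f) x - deriv (deriv g) x * f x := by ring

theorem monotoneOn_div_of_wronskianWithin_nonneg (ht : Convex ℝ t) (hts : t ⊆ s)
    (hg : DifferentiableOn ℝ g s) (hf : DifferentiableOn ℝ f s) (hg_ne : ∀ x ∈ t, g x ≠ 0)
    (hW : ∀ x ∈ interior t, 0 ≤ wronskianWithin s g f x) :
    MonotoneOn (fun x => f x / g x) t := by
  have hderiv (x : ℝ) (hx : x ∈ t) :
      HasDerivWithinAt (fun y => f y / g y) (wronskianWithin s g f x / g x ^ 2) s x :=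
    hasDerivWithinAt_div_eq_wronskianWithin (hg x (hts hx)) (hf x (hts hx)) (hg_ne x hx)
  exact monotoneOn_of_hasDerivWithinAt_nonneg ht
    (fun x hx => (hderiv x hx).continuousWithinAt.mono hts)
    (fun x hx => (hderiv x (interior_subset hx)).mono (interior_subset.trans hts))
    (fun x hx => div_nonneg (hW x hx) (sq_nonneg _))

theorem eventually_nhdsGT_lt_of_hasDerivWithinAt_pos {f' : ℝ} (hf : HasDerivWithinAt f f' (Ioi a) a)
    (hf' : 0 < f') : ∀ᶠ x in 𝓝[>] a, f a < f x := by
  have hslope : ∀ᶠ x in 𝓝[>] a, 0 < slope f a x :=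
    ((hasDerivWithinAt_iff_tendsto_slope' self_notMem_Ioi).1 hf).eventually_const_lt hf'
  filter_upwards [hslope, self_mem_nhdsWithin] with x hx hax
  exact (slope_pos_iff_of_le hax.le).1 hx

theorem pos_right_of_pos_on_Ioo (hab : a < b) (hts : Icc a b ⊆ s) (hs : UniqueDiffOn ℝ s)
    (hg : ContDiffOn ℝ 2 g s) (hf : ContDiffOn ℝ 2 f s)
    (hg_pos : ∀ x ∈ Ioc a b, 0 < g x) (hf_pos : ∀ x ∈ Ioo a b, 0 < f x)
    (hg_ineq : ∀ x ∈ Ioo a b, deriv (deriv g) x + q x * g x ≤ 0)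
    (hf_ineq : ∀ x ∈ Ioo a b, 0 ≤ deriv (deriv f) x + q x * f x)
    (hWa : 0 ≤ wronskianWithin s g f a) : 0 < f b := by
  have hW_mono : MonotoneOn (wronskianWithin s g f) (Icc a b) := by
    apply monotoneOn_wronskianWithin (q := q) hs (convex_Icc a b) hts hg hf <;>
      rw [interior_Icc]
    exacts [fun x hx => (hg_pos x (Ioo_subset_Ioc_self hx)).le, fun x hx => (hf_pos x hx).le,
      hg_ineq, hf_ineq]
  have hW_nonneg : ∀ x ∈ Icc a b, 0 ≤ wronskianWithin s g f x := fun x hx =>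
    hWa.trans (hW_mono (left_mem_Icc.2 hab.le) hx hx.1)
  have hquot_mono : MonotoneOn (fun x => f x / g x) (Ioc a b) :=
    monotoneOn_div_of_wronskianWithin_nonneg (convex_Ioc a b) (Ioc_subset_Icc_self.trans hts)
      (hg.differentiableOn two_ne_zero) (hf.differentiableOn two_ne_zero)
      (fun x hx => (hg_pos x hx).ne')
      (fun x hx => hW_nonneg x (Ioc_subset_Icc_self (interior_subset hx)))
  obtain ⟨y, hay, hyb⟩ := exists_between hab
  have hquot_pos : 0 < f b / g b :=
    (div_pos (hf_pos y ⟨hay, hyb⟩) (hg_pos y ⟨hay, hyb.le⟩)).trans_le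
      (hquot_mono ⟨hay, hyb.le⟩ (right_mem_Ioc.2 hab) hyb.le)
  exact (div_pos_iff_of_pos_right (hg_pos b (right_mem_Ioc.2 hab))).1 hquot_pos

theorem sturm_nonvanishing_general
    (hg : ContDiffOn ℝ 2 g (Ico a b)) (hg_pos : ∀ x ∈ Ioo a b, 0 < g x)
    (hg_ineq : ∀ x ∈ Ioo a b, deriv (deriv g) x + q x * g x ≤ 0)
    (hf : ContDiffOn ℝ 2 f (Ico a b))
    (hf_ineq : ∀ x ∈ Ioo a b, 0 ≤ deriv (deriv f) x + q x * f x)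
    (hfa : f a = 0) (hf'a : 0 < derivWithin f (Ico a b) a) :
    ∀ x ∈ Ioo a b, 0 < f x := by
  intro x hx
  have hab : a < b := hx.1.trans hx.2
  have ha : a ∈ Ico a b := left_mem_Ico.2 hab
  have hderiv : HasDerivWithinAt f (derivWithin f (Ico a b) a) (Ioi a) a :=
    (hf.differentiableOn two_ne_zero a ha).hasDerivWithinAt.mono_of_mem_nhdsWithin
      (Ico_mem_nhdsGT hab)
  have hga : 0 ≤ g a :=
    ge_of_tendsto ((hg.continuousOn a ha).mono_of_mem_nhdsWithin (Ico_mem_nhdsGT hab))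
      (mem_of_superset (Ioo_mem_nhdsGT hab) fun y hy => (hg_pos y hy).le)
  have hWa : 0 ≤ wronskianWithin (Ico a b) g f a := by
    simpa only [wronskianWithin, hfa, mul_zero, sub_zero] using mul_nonneg hga hf'a.le
  refine forall_mem_Ioo_lt_of_forall_Ioo_imp_lt (hf.continuousOn.mono Ioo_subset_Ico_self)
    (hfa ▸ eventually_nhdsGT_lt_of_hasDerivWithinAt_pos hderiv hf'a) (fun z hz hf_pos => ?_) x hx
  have hsub : Ioo a z ⊆ Ioo a b := Ioo_subset_Ioo_right hz.2.le
  exact pos_right_of_pos_on_Ioo hz.1 (Icc_subset_Ico_right hz.2) (uniqueDiffOn_Ico a b) hg hf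
    (fun y hy => hg_pos y ⟨hy.1, hy.2.trans_lt hz.2⟩) hf_pos
    (fun y hy => hg_ineq y (hsub hy)) (fun y hy => hf_ineq y (hsub hy)) hWa

end Real

/-- Theorem G.3: Sturm-comparison nonvanishing theorem for
`-f'' - (λ / cos² x) f = 0` on `[0, x₀]`. -/
theorem sturm_nonvanishing (lam x₀ : ℝ) (hx₀ : 0 < x₀) (hx₀' : x₀ < Real.pi / 2)
    (g f : ℝ → ℝ)
    (hg : ContDiffOn ℝ 2 g (Set.Icc 0 x₀))
    (hg_nonneg : ∀ x ∈ Set.Icc 0 x₀, 0 ≤ g x)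
    (hg_pos : ∀ x ∈ Set.Ioo 0 x₀, 0 < g x)
    (hg_ineq : ∀ x ∈ Set.Icc 0 x₀,
      deriv (deriv g) x + (lam / (Real.cos x) ^ 2) * g x ≤ 0)
    (hf : ContDiffOn ℝ 2 f (Set.Icc 0 x₀))
    (hf_eq : ∀ x ∈ Set.Icc 0 x₀,
      deriv (deriv f) x + (lam / (Real.cos x) ^ 2) * f x = 0)
    (hf0 : f 0 = 0) (hf'0 : deriv f 0 = 1) :
    ∀ x ∈ Set.Ioo 0 x₀, f x ≠ 0 := by
  have hf'0_within : derivWithin f (Ico 0 x₀) 0 = 1 :=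
    ((differentiableAt_of_deriv_ne_zero (hf'0 ▸ one_ne_zero)).derivWithin
      (uniqueDiffOn_Ico 0 x₀ 0 (left_mem_Ico.2 hx₀))).trans hf'0
  exact fun x hx => (sturm_nonvanishing_general (hg.mono Ico_subset_Icc_self) hg_pos
    (fun y hy => hg_ineq y (Ioo_subset_Icc_self hy)) (hf.mono Ico_subset_Icc_self)
    (fun y hy => (hf_eq y (Ioo_subset_Icc_self hy)).ge) hf0 (hf'0_within ▸ one_pos) x hx).ne'
end

section
/- Let B be the group with presentation ⟨r, s, t | r⁵ = s² = t² = 1, (r·t)² = 1, (s·t)² = 1, (r·s)⁴ = 1, (s·r³·s·r²)² = 1⟩. Then B is isomorphic as a group to S₅ × ℤ/2ℤ (the product of the symmetric group on five letters with the cyclic group of order 2); in particular B has order 240. -/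
namespace BringStmt9

def r : FreeGroup (Fin 3) := FreeGroup.of 0
def s : FreeGroup (Fin 3) := FreeGroup.of 1
def t : FreeGroup (Fin 3) := FreeGroup.of 2

/-- Relators of the presentation of the full symmetry group of Bring's surface. -/
def bringRels : Set (FreeGroup (Fin 3)) :=
  { r ^ 5, s ^ 2, t ^ 2, (r * t) ^ 2, (s * t) ^ 2, (r * s) ^ 4,
    (s * r ^ 3 * s * r ^ 2) ^ 2 }

/-- The full symmetry group of Bring's surface. -/
abbrev BringGroup := PresentedGroup bringRels

/-!
The conjugates `aᵢ = rⁱ s r⁻ⁱ` behave like adjacent transpositions of five cyclically arranged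
letters. Indeed `(s r)⁴ = 1` unfolds to `r = a₀ a₁ a₂ a₃`, the last relator says that `a₀` commutes
with `a₃`, hence also with `a₂`, and comparing `r a₀ r⁻¹ = a₁` with the product formula for `r`
gives the braid relation. So `⟨r, s⟩` is generated by elements satisfying the Coxeter relations of
`S₅`, and has at most `5!` elements. As `t` is an involution inverting `r` and `s`, the whole group
has at most `2 · 5! = 240` elements, while explicit permutations give a surjection onto a group
with exactly that many.
-/

open Cardinal
open scoped Nat Pointwise

section Words

variable {G : Type*} [Group G] {a : ℕ → G}

/-- The word `a k * a (k + 1) * ⋯ * a (n - 1)`, which is `1` if `n ≤ k`. For the adjacent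
transpositions `a i = (i i+1)` it is the cycle `(k k+1 ⋯ n)`. -/
def segProd (a : ℕ → G) (k n : ℕ) : G := ((List.Ico k n).map a).prod

lemma segProd_self (n : ℕ) : segProd a n n = 1 := by
  simp [segProd]

lemma segProd_eq_mul {k n : ℕ} (h : k < n) : segProd a k n = a k * segProd a (k + 1) n := by
  simp [segProd, List.Ico.eq_cons h]

lemma segProd_mul_segProd {k m n : ℕ} (hkm : k ≤ m) (hmn : m ≤ n) :
    segProd a k m * segProd a m n = segProd a k n := by
  simp [segProd, ← List.Ico.append_consecutive hkm hmn]

lemma segProd_succ {k n : ℕ} (h : k ≤ n) : segProd a k (n + 1) = segProd a k n * a n := by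
  simp [segProd, List.Ico.succ_top h]

lemma commute_segProd {x : G} {k n : ℕ} (h : ∀ i, k ≤ i → i < n → Commute x (a i)) :
    Commute x (segProd a k n) := by
  refine Commute.list_prod_right _ _ fun y hy ↦ ?_
  obtain ⟨i, hi, rfl⟩ := List.mem_map.1 hy
  exact h i (List.Ico.mem.1 hi).1 (List.Ico.mem.1 hi).2

lemma segProd_mem {H : Subgroup G} {k n : ℕ} (h : ∀ i < n, a i ∈ H) : segProd a k n ∈ H := by
  refine H.list_prod_mem fun y hy ↦ ?_
  obtain ⟨i, hi, rfl⟩ := List.mem_map.1 hy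
  exact h i (List.Ico.mem.1 hi).2

end Words

section TypeA

variable {G : Type*} [Group G] {a : ℕ → G} {n : ℕ}

/-- The first `n` terms `a 0, …, a (n - 1)` of a sequence satisfy the Coxeter relations of type
`Aₙ`, that is, those of the adjacent transpositions in `Sₙ₊₁`. -/
structure IsCoxeterTypeA (a : ℕ → G) (n : ℕ) : Prop where
  mul_self : ∀ i < n, a i * a i = 1
  braid : ∀ i, i + 1 < n → SemiconjBy (a i * a (i + 1)) (a i) (a (i + 1))
  commute : ∀ i j, i + 1 < j → j < n → Commute (a i) (a j)

namespace IsCoxeterTypeA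

lemma mono {m : ℕ} (h : IsCoxeterTypeA a n) (hmn : m ≤ n) : IsCoxeterTypeA a m where
  mul_self i hi := h.mul_self i (hi.trans_le hmn)
  braid i hi := h.braid i (hi.trans_le hmn)
  commute i j hij hj := h.commute i j hij (hj.trans_le hmn)

lemma segProd_semiconjBy {j k : ℕ} (h : IsCoxeterTypeA a n) (hkj : k ≤ j) (hjn : j + 1 < n) :
    SemiconjBy (segProd a k n) (a j) (a (j + 1)) := by
  have hsplit : segProd a k n =
      segProd a k j * (a j * a (j + 1)) * segProd a (j + 2) n := by
    rw [← segProd_mul_segProd hkj (by lia : j ≤ n), segProd_eq_mul (by lia : j < n),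
      segProd_eq_mul hjn]
    simp only [mul_assoc]
  have hleft : Commute (a (j + 1)) (segProd a k j) :=
    commute_segProd fun i _ hi ↦ (h.commute i (j + 1) (by lia) hjn).symm
  have hright : Commute (a j) (segProd a (j + 2) n) :=
    commute_segProd fun i hi hin ↦ h.commute j i (by lia) hin
  rw [hsplit]
  exact (hleft.symm.semiconjBy.mul_left (h.braid j hjn)).mul_left hright.symm.semiconjBy

/-- In `Sₙ₊₂` the cosets `segProd a k (n + 1) * Sₙ₊₁` are indexed by the image `k` of the last
point, so `a j` exchanges the cosets `j` and `j + 1` and fixes the others. -/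
lemma exists_mul_segProd_eq {j k : ℕ} (h : IsCoxeterTypeA a (n + 1)) (hj : j ≤ n)
    (hk : k ≤ n + 1) :
    ∃ l ≤ n + 1, ∃ g ∈ Subgroup.closure (a '' Set.Iio n),
      a j * segProd a k (n + 1) = segProd a l (n + 1) * g := by
  have gen_mem {i : ℕ} (hi : i < n) : a i ∈ Subgroup.closure (a '' Set.Iio n) :=
    Subgroup.subset_closure ⟨i, hi, rfl⟩
  obtain hlt | rfl | rfl | hgt : j + 1 < k ∨ j + 1 = k ∨ j = k ∨ k < j := by lia
  · have hcomm : Commute (a j) (segProd a k (n + 1)) :=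
      commute_segProd fun i hi hin ↦ h.commute j i (by lia) hin
    exact ⟨k, hk, a j, gen_mem (by lia), hcomm⟩
  · exact ⟨j, by lia, 1, one_mem _, by rw [mul_one, segProd_eq_mul (by lia : j < n + 1)]⟩
  · refine ⟨j + 1, by lia, 1, one_mem _, ?_⟩
    rw [segProd_eq_mul (by lia : j < n + 1), ← mul_assoc, h.mul_self j (by lia), one_mul, mul_one]
  · obtain ⟨i, rfl⟩ : ∃ i, j = i + 1 := ⟨j - 1, by lia⟩
    exact ⟨k, hk, a i, gen_mem (by lia), (h.segProd_semiconjBy (by lia) (by lia)).eq.symm⟩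

lemma closure_succ_subset_mul (h : IsCoxeterTypeA a (n + 1)) :
    (Subgroup.closure (a '' Set.Iio (n + 1)) : Set G) ⊆
      ((segProd a · (n + 1)) '' Set.Iic (n + 1)) * (Subgroup.closure (a '' Set.Iio n) : Set G) := by
  set W : Set G := (segProd a · (n + 1)) '' Set.Iic (n + 1)
  set H : Subgroup G := Subgroup.closure (a '' Set.Iio n)
  have gen_mul_mem {j : ℕ} (hj : j < n + 1) {y : G} (hy : y ∈ W * (H : Set G)) :
      a j * y ∈ W * (H : Set G) := by
    obtain ⟨_, ⟨k, hk, rfl⟩, g, hg, rfl⟩ := hy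
    obtain ⟨l, hl, g', hg', hmul⟩ := h.exists_mul_segProd_eq (Nat.le_of_lt_succ hj) hk
    refine ⟨_, ⟨l, hl, rfl⟩, g' * g, mul_mem hg' hg, ?_⟩
    simp only [← mul_assoc, hmul]
  intro x hx
  induction hx using Subgroup.closure_induction_left with
  | one => exact ⟨1, ⟨n + 1, Set.mem_Iic.2 le_rfl, segProd_self _⟩, 1, one_mem _, mul_one 1⟩
  | mul_left _ hx y _ hy =>
    obtain ⟨j, hj, rfl⟩ := hx
    exact gen_mul_mem hj hy
  | inv_mul_cancel _ hx y _ hy =>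
    obtain ⟨j, hj, rfl⟩ := hx
    rw [inv_eq_of_mul_eq_one_left (h.mul_self j hj)]
    exact gen_mul_mem hj hy

theorem mk_closure_le (h : IsCoxeterTypeA a n) :
    #(Subgroup.closure (a '' Set.Iio n)) ≤ (n + 1)! := by
  induction n with
  | zero => simp
  | succ n ih =>
    have hW : #((segProd a · (n + 1)) '' Set.Iic (n + 1)) ≤ (n + 2 : ℕ) := by
      have himage := mk_image_le_lift (f := (segProd a · (n + 1))) (s := Set.Iic (n + 1))
      rwa [lift_uzero, mk_fintype (Set.Iic (n + 1)), Fintype.card_Iic, Nat.card_Iic,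
        lift_natCast] at himage
    calc #(Subgroup.closure (a '' Set.Iio (n + 1)))
        ≤ #((segProd a · (n + 1)) '' Set.Iic (n + 1)) * #(Subgroup.closure (a '' Set.Iio n)) :=
          (mk_le_mk_of_subset h.closure_succ_subset_mul).trans mk_mul_le
      _ ≤ (n + 2 : ℕ) * ((n + 1)! : ℕ) := mul_le_mul' hW (ih (h.mono n.le_succ))
      _ = (n + 2)! := by rw [← Nat.cast_mul, ← Nat.factorial_succ]

end IsCoxeterTypeA

end TypeA

section Moore

variable {G : Type*} [Group G] {r s : G}

/-- The sequence of conjugates `rⁱ s r⁻ⁱ`. For the rotation `r` of `n + 1` cyclically arranged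
points and the transposition `s` of two neighbours, its first `n` terms are the adjacent
transpositions. -/
def conjPow (r s : G) (i : ℕ) : G := MulAut.conj (r ^ i) s

lemma conjPow_eq (r s : G) (i : ℕ) : conjPow r s i = r ^ i * s * (r ^ i)⁻¹ := rfl

lemma conjPow_zero (r s : G) : conjPow r s 0 = s := by
  simp [conjPow]

lemma conj_pow_conjPow (r s : G) (i j : ℕ) :
    MulAut.conj (r ^ i) (conjPow r s j) = conjPow r s (i + j) := by
  simp only [conjPow, pow_add, map_mul, MulAut.mul_apply]

lemma conjPow_mul_self (hs : s * s = 1) (i : ℕ) : conjPow r s i * conjPow r s i = 1 := by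
  rw [conjPow, ← map_mul, hs, map_one]

lemma commute_conjPow {i j : ℕ} (h : Commute s (conjPow r s j)) :
    Commute (conjPow r s i) (conjPow r s (i + j)) := by
  rw [← conj_pow_conjPow]
  exact h.map (MulAut.conj (r ^ i))

lemma segProd_conjPow_mul_pow (r s : G) (m : ℕ) :
    segProd (conjPow r s) 0 m * r ^ m = (s * r) ^ m := by
  induction m with
  | zero => simp [segProd_self]
  | succ m ih =>
    rw [segProd_succ m.zero_le, pow_succ (s * r), ← ih, conjPow_eq]
    group

/-- The relations of Moore's presentation of `Sₙ₊₁`, in which `r` stands for an `(n + 1)`-cycle and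
`s` for a transposition of two cyclically consecutive points. The commutation relation says that
`s` and `rʲ s r⁻ʲ` have disjoint supports. -/
structure IsMoorePair (r s : G) (n : ℕ) : Prop where
  pow_eq_one : r ^ (n + 1) = 1
  mul_self : s * s = 1
  mul_pow_eq_one : (s * r) ^ n = 1
  commute : ∀ j, 2 ≤ j → j < n → Commute s (conjPow r s j)

namespace IsMoorePair

variable {n : ℕ}

lemma segProd_conjPow (h : IsMoorePair r s n) : segProd (conjPow r s) 0 n = r := by
  have hprod : segProd (conjPow r s) 0 n * r ^ n = 1 :=
    (segProd_conjPow_mul_pow r s n).trans h.mul_pow_eq_one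
  rw [eq_inv_of_mul_eq_one_left hprod, inv_eq_iff_mul_eq_one, ← pow_succ, h.pow_eq_one]

/-- Here `r = s (r s r⁻¹) q`, where `q` commutes with `s`, and `r` conjugates `s` to `r s r⁻¹`. -/
lemma semiconjBy_conjPow_one (h : IsMoorePair r s n) (hn : 1 < n) :
    SemiconjBy (s * conjPow r s 1) s (conjPow r s 1) := by
  set q := segProd (conjPow r s) 2 n
  have hr : r = s * conjPow r s 1 * q := by
    calc r = segProd (conjPow r s) 0 n := h.segProd_conjPow.symm
      _ = s * conjPow r s 1 * q := by
        rw [segProd_eq_mul (by lia : 0 < n), segProd_eq_mul hn, conjPow_zero, mul_assoc]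
  have hq : Commute s q := commute_segProd h.commute
  have hconj : SemiconjBy r s (conjPow r s 1) := by
    simp [SemiconjBy, conjPow_eq]
  rw [eq_mul_inv_of_mul_eq hr.symm]
  exact hconj.mul_left hq.symm.inv_left.semiconjBy

lemma isCoxeterTypeA (h : IsMoorePair r s n) : IsCoxeterTypeA (conjPow r s) n where
  mul_self i _ := conjPow_mul_self h.mul_self i
  braid i hi := by
    have hbraid := (h.semiconjBy_conjPow_one (by lia)).map (MulAut.conj (r ^ i))
    rwa [map_mul, conj_pow_conjPow] at hbraid
  commute i j hij hj := by
    obtain ⟨d, rfl⟩ := Nat.exists_eq_add_of_le (Nat.le_of_succ_le hij.le)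
    exact commute_conjPow (h.commute d (by lia) (by lia))

lemma closure_le (h : IsMoorePair r s n) (hn : 0 < n) :
    Subgroup.closure {r, s} ≤ Subgroup.closure (conjPow r s '' Set.Iio n) := by
  set H := Subgroup.closure (conjPow r s '' Set.Iio n)
  have conj_mem : ∀ i < n, conjPow r s i ∈ H := fun i hi ↦ Subgroup.subset_closure ⟨i, hi, rfl⟩
  have hr : segProd (conjPow r s) 0 n ∈ H := segProd_mem conj_mem
  have hs : conjPow r s 0 ∈ H := conj_mem 0 hn
  rw [h.segProd_conjPow] at hr
  rw [conjPow_zero] at hs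
  exact (Subgroup.closure_le H).2 (Set.pair_subset hr hs)

theorem mk_closure_le (h : IsMoorePair r s n) (hn : 0 < n) :
    #(Subgroup.closure {r, s}) ≤ (n + 1)! :=
  (mk_le_mk_of_subset (h.closure_le hn)).trans h.isCoxeterTypeA.mk_closure_le

end IsMoorePair

end Moore

section Involutions

variable {G : Type*} [Group G]

lemma commute_of_mul_self_eq_one {x y : G} (hx : x * x = 1) (hy : y * y = 1)
    (hxy : (x * y) ^ 2 = 1) : Commute x y :=
  calc x * y = (x * y)⁻¹ := eq_inv_of_mul_eq_one_left ((sq (x * y)).symm.trans hxy)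
    _ = y⁻¹ * x⁻¹ := mul_inv_rev x y
    _ = y * x := by rw [inv_eq_of_mul_eq_one_left hx, inv_eq_of_mul_eq_one_left hy]

lemma conj_eq_inv_of_sq_eq_one {x t : G} (ht : t ^ 2 = 1) (hxt : (x * t) ^ 2 = 1) :
    t * x * t⁻¹ = x⁻¹ := by
  have ht' : t⁻¹ = t := inv_eq_of_mul_eq_one_left ((sq t).symm.trans ht)
  rw [ht', mul_assoc]
  exact (inv_eq_of_mul_eq_one_right (by simpa only [sq, mul_assoc] using hxt)).symm

lemma zpowers_le_normalizer_closure {S : Set G} {t : G} (h : ∀ x ∈ S, t * x * t⁻¹ = x⁻¹) :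
    Subgroup.zpowers t ≤ Subgroup.normalizer (Subgroup.closure S) := by
  have himage : MulAut.conj t '' S = S⁻¹ := by
    rw [← Set.image_inv_eq_inv]
    exact Set.image_congr h
  rw [Subgroup.zpowers_le, Subgroup.mem_normalizer_iff_map_conj_eq, MonoidHom.map_closure]
  exact (congrArg Subgroup.closure himage).trans (Subgroup.closure_inv S)

lemma mk_closure_insert_le {S : Set G} {t : G} (h : ∀ x ∈ S, t * x * t⁻¹ = x⁻¹) :
    #(Subgroup.closure (insert t S)) ≤ #(Subgroup.zpowers t) * #(Subgroup.closure S) := by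
  rw [Set.insert_eq, Subgroup.closure_union, ← Subgroup.zpowers_eq_closure]
  have hmul := Subgroup.coe_mul_of_left_le_normalizer_right _ _ (zpowers_le_normalizer_closure h)
  exact (mk_le_mk_of_subset hmul.subset).trans mk_mul_le

lemma mk_zpowers_le_two {t : G} (ht : t ^ 2 = 1) : #(Subgroup.zpowers t) ≤ 2 := by
  have hfin : Finite (Subgroup.zpowers t) :=
    isOfFinOrder_iff_pow_eq_one.2 ⟨2, two_pos, ht⟩ |>.finite_zpowers
  rw [← Nat.cast_card, Nat.card_zpowers]
  exact_mod_cast orderOf_le_of_pow_eq_one two_pos ht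

end Involutions

section BringTriple

variable {G : Type*} [Group G] {ρ σ τ : G}

/-- Three elements of a group satisfying the relations of the presentation `bringRels`. -/
structure IsBringTriple (ρ σ τ : G) : Prop where
  rotation_pow : ρ ^ 5 = 1
  halfTurn_sq : σ ^ 2 = 1
  reflection_sq : τ ^ 2 = 1
  rotation_mul_reflection_sq : (ρ * τ) ^ 2 = 1
  halfTurn_mul_reflection_sq : (σ * τ) ^ 2 = 1
  rotation_mul_halfTurn_pow : (ρ * σ) ^ 4 = 1
  mul_conj_sq : (σ * ρ ^ 3 * σ * ρ ^ 2) ^ 2 = 1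

lemma isBringTriple_map {f : FreeGroup (Fin 3) →* G} (hf : ∀ w ∈ bringRels, f w = 1) :
    IsBringTriple (f r) (f s) (f t) := by
  simp only [bringRels, Set.forall_mem_insert, Set.mem_singleton_iff, forall_eq, map_mul,
    map_pow] at hf
  obtain ⟨hr, hs, ht, hrt, hst, hrs, hu⟩ := hf
  exact ⟨hr, hs, ht, hrt, hst, hrs, hu⟩

namespace IsBringTriple

lemma isMoorePair (h : IsBringTriple ρ σ τ) : IsMoorePair ρ σ 4 := by
  have hσ : σ * σ = 1 := (sq σ).symm.trans h.halfTurn_sq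
  have hσρ : (σ * ρ) ^ 4 = 1 := by
    simpa [h.rotation_mul_halfTurn_pow] using (mul_pow_mul ρ σ 4).symm
  have hinv : (ρ ^ 3)⁻¹ = ρ ^ 2 :=
    inv_eq_of_mul_eq_one_left (by rw [← pow_add, h.rotation_pow])
  have h3 : Commute σ (conjPow ρ σ 3) := by
    refine commute_of_mul_self_eq_one hσ (conjPow_mul_self hσ 3) ?_
    simpa only [conjPow_eq, hinv, mul_assoc] using h.mul_conj_sq
  have h2 : Commute σ (conjPow ρ σ 2) := by
    have h25 : Commute (conjPow ρ σ 2) (conjPow ρ σ (2 + 3)) := commute_conjPow h3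
    have h5 : conjPow ρ σ (2 + 3) = σ := by simp [conjPow_eq, h.rotation_pow]
    exact (h5 ▸ h25).symm
  refine ⟨h.rotation_pow, hσ, hσρ, fun j h2j hj4 ↦ ?_⟩
  interval_cases j
  exacts [h2, h3]

lemma reflection_conj (h : IsBringTriple ρ σ τ) :
    ∀ x ∈ ({ρ, σ} : Set G), τ * x * τ⁻¹ = x⁻¹ := by
  rintro _ (rfl | rfl)
  · exact conj_eq_inv_of_sq_eq_one h.reflection_sq h.rotation_mul_reflection_sq
  · exact conj_eq_inv_of_sq_eq_one h.reflection_sq h.halfTurn_mul_reflection_sq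

theorem mk_closure_le (h : IsBringTriple ρ σ τ) : #(Subgroup.closure {τ, ρ, σ}) ≤ 240 := by
  have hrotations : #(Subgroup.closure {ρ, σ}) ≤ 120 := by
    simpa [Nat.factorial] using h.isMoorePair.mk_closure_le four_pos
  calc #(Subgroup.closure {τ, ρ, σ})
      ≤ #(Subgroup.zpowers τ) * #(Subgroup.closure {ρ, σ}) :=
        mk_closure_insert_le h.reflection_conj
    _ ≤ 2 * 120 := mul_le_mul' (mk_zpowers_le_two h.reflection_sq) hrotations
    _ = 240 := by norm_num

end IsBringTriple

end BringTriple

section Bring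

open PresentedGroup (mk)

lemma closure_mk_eq_top :
    Subgroup.closure {mk bringRels t, mk bringRels r, mk bringRels s} = ⊤ := by
  rw [eq_top_iff, ← PresentedGroup.closure_range_of bringRels, Subgroup.closure_le]
  rintro _ ⟨i, rfl⟩
  apply Subgroup.subset_closure
  fin_cases i
  exacts [.inr (.inl rfl), .inr (.inr rfl), .inl rfl]

theorem mk_bringGroup_le : #BringGroup ≤ 240 := by
  have htriple : IsBringTriple (mk bringRels r) (mk bringRels s) (mk bringRels t) :=
    isBringTriple_map fun _ ↦ PresentedGroup.one_of_mem
  have hle := htriple.mk_closure_le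
  rw [closure_mk_eq_top] at hle
  exact mk_univ.symm.trans_le hle

/-- The images in `S₅ × C₂` of the three generators. The image of `t` has to invert those of `r`
and `s`, which forces its first component. -/
def permGens : Fin 3 → Equiv.Perm (Fin 5) × Multiplicative (ZMod 2) :=
  ![(finRotate 5, 1), (Equiv.swap 3 4, 1),
    (Equiv.swap 0 2 * Equiv.swap 3 4, Multiplicative.ofAdd 1)]

lemma lift_permGens_eq_one : ∀ w ∈ bringRels, FreeGroup.lift permGens w = 1 := by
  intro w hw
  rcases hw with rfl | rfl | rfl | rfl | rfl | rfl | rfl <;>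
    simp only [r, s, t, map_mul, map_pow, FreeGroup.lift_apply_of] <;> decide

/-- The homomorphism from the group of Bring's surface onto `S₅ × C₂` given by `permGens`. -/
def toPermProd : BringGroup →* Equiv.Perm (Fin 5) × Multiplicative (ZMod 2) :=
  PresentedGroup.toGroup lift_permGens_eq_one

lemma permGens_mem_range (i : Fin 3) : permGens i ∈ toPermProd.range :=
  ⟨PresentedGroup.of i, PresentedGroup.toGroup.of lift_permGens_eq_one⟩

lemma inl_mem_range (p : Equiv.Perm (Fin 5)) :
    (p, (1 : Multiplicative (ZMod 2))) ∈ toPermProd.range := by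
  suffices toPermProd.range.comap (MonoidHom.inl _ _) = ⊤ from
    Subgroup.mem_comap.1 (this ▸ Subgroup.mem_top p)
  rw [eq_top_iff, ← Equiv.Perm.closure_cycle_adjacent_swap (isCycle_finRotate (n := 3))
    (support_finRotate (n := 3)) 3, Subgroup.closure_le]
  exact Set.pair_subset (permGens_mem_range 0) (permGens_mem_range 1)

theorem toPermProd_surjective : Function.Surjective toPermProd := by
  rintro ⟨p, z⟩
  rw [← MonoidHom.mem_range]
  obtain rfl | rfl : z = 1 ∨ z = Multiplicative.ofAdd 1 := by revert z; decide
  · exact inl_mem_range p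
  · set w : Equiv.Perm (Fin 5) := Equiv.swap 0 2 * Equiv.swap 3 4
    have hmul : (p * w⁻¹, 1) * permGens 2 = (p, Multiplicative.ofAdd 1) :=
      Prod.ext (inv_mul_cancel_right p w) (one_mul _)
    exact hmul ▸ mul_mem (inl_mem_range (p * w⁻¹)) (permGens_mem_range 2)

lemma card_perm_prod : Nat.card (Equiv.Perm (Fin 5) × Multiplicative (ZMod 2)) = 240 := by
  rw [Nat.card_prod, Nat.card_perm]
  simp [Nat.factorial]

end Bring

/-- The full symmetry group of Bring's surface is isomorphic to `S₅ × ℤ/2ℤ`;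
in particular it has order 240. -/
theorem bringGroup_iso :
    Nonempty (BringGroup ≃* Equiv.Perm (Fin 5) × Multiplicative (ZMod 2)) ∧
    Nat.card BringGroup = 240 := by
  have hfin : Finite BringGroup :=
    mk_lt_aleph0_iff.1 (mk_bringGroup_le.trans_lt (natCast_lt_aleph0 (n := 240)))
  have hle : Nat.card BringGroup ≤ 240 := by
    exact_mod_cast Nat.cast_card (α := BringGroup) ▸ mk_bringGroup_le
  have hcard : Nat.card BringGroup = 240 :=
    hle.antisymm (card_perm_prod ▸ Nat.card_le_card_of_surjective _ toPermProd_surjective)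
  have hbij : Function.Bijective toPermProd :=
    (Nat.bijective_iff_surjective_and_card _).2
      ⟨toPermProd_surjective, hcard.trans card_perm_prod.symm⟩
  exact ⟨⟨MulEquiv.ofBijective toPermProd hbij⟩, hcard⟩

end BringStmt9
end

section
/- Let q = √(3 + 2√2 − 2√(4 + 3√2)) and a = 2^(1/4) − 1. For x ∈ [0, a] set c₁(x) = √(q² − x²) and c₂(x) = √((1/sin(π/8))² − (x + cos(π/8)/sin(π/8))²), and define φ₁(x, y) = (y − √(1 − 22·x²) − 1)·(y − √(q² − x²)). Then ∫₀ᵃ (∫_{c₁(x)}^{c₂(x)} φ₁(x, y)² / y² dy) dx > 28089/1000000. -/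
open intervalIntegral

/-!
The slice of `Ω_T` over `x` runs from `y = √(Q - x²)` to `y = √(1 - m x - x²)`, where `Q = q²` and
`m = 2 cot (π / 8) = 2 (1 + √2)`, and these curves as well as the second zero `1 + √(1 - 22 x²)` of
`φ₁` are concave in `x`. Over each interval of a mesh of width `3 / 2000` the upper curve and the
second zero are replaced by chords below them and the lower curve by a slightly raised chord above
it; each replacement decreases the integral of `φ₁² / y²`. On the resulting quadrilateral `1 / y²`
is replaced by an odd-degree Taylor polynomial, which lies below it everywhere on `y > 0`, so that a
rescaling to the square `[0, 16]²` leaves a polynomial of degree at most `16` in each variable. The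
Newton–Cotes rule with `17` nodes integrates it exactly, and as all data are integers, the
inequality becomes one between integers.
-/

namespace Bolza

open Polynomial

noncomputable section

section NewtonCotes

/-- The closed Newton–Cotes rule with nodes `0, …, 16` on `[0, 16]`, as pairs of a node and the
numerator of its weight over the common denominator `488462349375`. -/
def newtonCotes : List (ℕ × ℤ) :=
  [(0, 120348894184), (1, 1021012852736), (2, -1437849077760), (3, 6657694842880),
    (4, -15435988860160), (5, 33420711149568), (6, -54452275263488), (7, 74951000145920),
    (8, -81873911777760), (9, 74951000145920), (10, -54452275263488), (11, 33420711149568),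
    (12, -15435988860160), (13, 6657694842880), (14, -1437849077760), (15, 1021012852736),
    (16, 120348894184)]

/-- The sum of the values of `f` at the nodes of `newtonCotes`, weighted by the numerators;
dividing it by `488462349375` gives the quadrature value. -/
def newtonCotesSum {R : Type*} [Ring R] (f : ℕ → R) : R :=
  (newtonCotes.map fun p => (p.2 : R) * f p.1).sum

theorem le_of_mem_newtonCotes : ∀ p ∈ newtonCotes, p.1 ≤ 16 := by decide

theorem newtonCotesSum_moment :
    ∀ k : ℕ, k < 17 →
      (k + 1) * newtonCotesSum (fun j => (j : ℤ) ^ k) = 488462349375 * 16 ^ (k + 1) := by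
  decide +kernel

theorem newtonCotesSum_congr {R : Type*} [Ring R] {f g : ℕ → R} (h : ∀ j ≤ 16, f j = g j) :
    newtonCotesSum f = newtonCotesSum g :=
  congrArg List.sum <| List.map_congr_left fun p hp => by rw [h p.1 (le_of_mem_newtonCotes p hp)]

theorem map_newtonCotesSum {R S : Type*} [Ring R] [Ring S] (φ : R →+* S) (f : ℕ → R) :
    φ (newtonCotesSum f) = newtonCotesSum fun j => φ (f j) := by
  simp only [newtonCotesSum, map_list_sum, List.map_map, Function.comp_def, map_mul, map_intCast]

theorem newtonCotesSum_sum_mul {R ι : Type*} [CommRing R] (s : Finset ι) (a : ι → R)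
    (f : ι → ℕ → R) :
    newtonCotesSum (fun j => ∑ i ∈ s, a i * f i j) = ∑ i ∈ s, a i * newtonCotesSum (f i) := by
  simp only [newtonCotesSum, ← List.sum_map_mul_left, Finset.mul_sum, mul_left_comm]
  induction s using Finset.cons_induction with
  | empty => simp
  | cons i s hi ih => simp only [Finset.sum_cons, List.sum_map_add, ih]

theorem natDegree_newtonCotesSum_le {f : ℕ → ℝ[X]} {n : ℕ} (hf : ∀ j ≤ 16, (f j).natDegree ≤ n) :
    (newtonCotesSum f).natDegree ≤ n := by
  refine List.sum_induction (fun p : ℝ[X] => p.natDegree ≤ n)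
    (fun _ _ => natDegree_add_le_of_degree_le) (natDegree_zero.trans_le n.zero_le) fun p hp => ?_
  obtain ⟨q, hq, rfl⟩ := List.mem_map.mp hp
  exact (natDegree_mul_le_of_le (natDegree_intCast _).le
    (hf _ (le_of_mem_newtonCotes q hq))).trans_eq (zero_add n)

theorem integral_eval_eq_newtonCotesSum {P : ℝ[X]} (hP : P.natDegree < 17) :
    ∫ t in (0 : ℝ)..16, P.eval t = newtonCotesSum (fun j => P.eval (j : ℝ)) / 488462349375 := by
  have moment : ∀ k ∈ Finset.range 17, ∫ t in (0 : ℝ)..16, P.coeff k * t ^ k =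
      P.coeff k * newtonCotesSum (fun j => (j : ℝ) ^ k) / 488462349375 := by
    intro k hk
    have h := congrArg (Int.castRingHom ℝ) (newtonCotesSum_moment k (Finset.mem_range.mp hk))
    rw [map_mul, map_newtonCotesSum] at h
    push_cast [eq_intCast] at h
    rw [intervalIntegral.integral_const_mul, integral_pow, mul_div_assoc]
    congr 1
    rw [div_eq_div_iff (by positivity) (by norm_num), zero_pow k.succ_ne_zero]
    linarith
  simp only [eval_eq_sum_range' hP, newtonCotesSum_sum_mul, Finset.sum_div]
  rw [intervalIntegral.integral_finsetSum
    fun k _ => Continuous.intervalIntegrable (by fun_prop) _ _]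
  exact Finset.sum_congr rfl moment

end NewtonCotes

section Taylor

variable {R S : Type*} [CommRing R] [CommRing S]

/-- The Taylor polynomial of `1 / y ^ 2` at `η` with `n` terms, multiplied by `η ^ (n + 1)` so that
its coefficients are polynomials in `η`: the sum of `(j + 1) (η - y) ^ j η ^ (n - 1 - j)` over
`j < n`. -/
def invSqTaylor (η y : R) : ℕ → R
  | 0 => 0
  | n + 1 => η * invSqTaylor η y n + (n + 1) * (η - y) ^ n

theorem map_invSqTaylor (φ : R →+* S) (η y : R) (n : ℕ) :
    φ (invSqTaylor η y n) = invSqTaylor (φ η) (φ y) n := by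
  induction n with
  | zero => exact map_zero φ
  | succ n ih => simp [invSqTaylor, ih]

theorem invSqTaylor_mul_sq (η y : R) (n : ℕ) :
    invSqTaylor η y n * y ^ 2 = η ^ (n + 1) - (η - y) ^ n * (η + n * y) := by
  induction n with
  | zero => simp [invSqTaylor]
  | succ n ih =>
    rw [invSqTaylor, add_mul, mul_assoc, ih]
    push_cast
    ring

theorem continuous_invSqTaylor (η : ℝ) (n : ℕ) : Continuous fun y => invSqTaylor η y n := by
  induction n with
  | zero => exact continuous_const
  | succ n ih =>
    simp only [invSqTaylor]
    fun_prop

theorem natDegree_invSqTaylor_le (a : R) {p : R[X]} (hp : p.natDegree ≤ 1) (n : ℕ) :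
    (invSqTaylor (C a) p n).natDegree ≤ n - 1 := by
  induction n with
  | zero => simp [invSqTaylor]
  | succ n ih =>
    have hsub : (C a - p).natDegree ≤ 1 :=
      natDegree_sub_le_of_le ((natDegree_C a).trans_le zero_le_one) hp
    have hcoeff : ((n + 1 : R[X])).natDegree ≤ 0 := by compute_degree
    exact natDegree_add_le_of_degree_le ((natDegree_C_mul_le a _).trans (by omega))
      ((natDegree_mul_le_of_le hcoeff (natDegree_pow_le_of_le n hsub)).trans (by omega))

theorem invSqTaylor_div_le {η y : ℝ} (hη : 0 < η) (hy : 0 < y) {n : ℕ} (hn : Even n) :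
    invSqTaylor η y n / η ^ (n + 1) ≤ 1 / y ^ 2 := by
  rw [div_le_div_iff₀ (by positivity) (by positivity), invSqTaylor_mul_sq, one_mul, sub_le_self_iff]
  exact mul_nonneg (hn.pow_nonneg _) (by positivity)

end Taylor

section Strip

section CommSemiring

variable {R S : Type*} [CommSemiring R] [CommSemiring S]

/-- Sixteen times the value at `t` of the linear function on `[0, 16]` with end values `p.1` and
`p.2`; the argument `t'` stands for `16 - t`, so that the formula also makes sense in `ℕ`. -/
def interp (p : R × R) (t' t : R) : R :=
  t' * p.1 + t * p.2

/-- The polynomial `φ₁ ^ 2 * d` in the coordinate `κ` on `[0, 16]` of a vertical segment of length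
`16 * d` that starts at the zero `c₁` of `φ₁` and ends at distance `16 * g` below the other one;
`κ'` stands for `16 - κ`. -/
def sliceWeight (d g κ' κ : R) : R :=
  d ^ 3 * κ ^ 2 * (16 * g + κ' * d) ^ 2

theorem map_interp (φ : R →+* S) (p : R × R) (t' t : R) :
    φ (interp p t' t) = interp (p.map φ φ) (φ t') (φ t) := by
  simp [interp]

theorem map_sliceWeight (φ : R →+* S) (d g κ' κ : R) :
    φ (sliceWeight d g κ' κ) = sliceWeight (φ d) (φ g) (φ κ') (φ κ) := by
  simp only [sliceWeight, map_mul, map_pow, map_add, map_ofNat]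

end CommSemiring

/-- A quadrilateral with two vertical sides, bounded by chords of the curves `c₁` and `c₂`: the
values at both vertical sides of `c₁`, of the difference `width` between `c₂` and `c₁`, and of the
difference `gap` between the second zero of `φ₁` and `c₂`. The entry `centre` is the point at
which `1 / y ^ 2` is expanded, measured in `1 / 256` of the unit of the other entries. -/
structure Strip (R : Type*) where
  centre : R
  lower : R × R
  width : R × R
  gap : R × R

/-- The strip with the images under `f` of all entries. -/
def Strip.map {R S : Type*} (f : R → S) (s : Strip R) : Strip S :=
  ⟨f s.centre, s.lower.map f f, s.width.map f f, s.gap.map f f⟩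

section CommRing

variable {R S : Type*} [CommRing R] [CommRing S]

/-- The integrand of `sliceIntegral` in the coordinate `κ` on `[0, 16]`, with `1 / y ^ 2` replaced
by its Taylor polynomial and with powers of the unit of length cleared. -/
def sliceIntegrand (η c d g κ : R) : R :=
  sliceWeight d g (16 - κ) κ * invSqTaylor η (16 * c + κ * d) 12

/-- `sliceIntegrand` along the vertical segment of `s` with horizontal coordinate `t`, where
`0 ≤ t ≤ 16`. -/
def Strip.integrand (s : Strip R) (t κ : R) : R :=
  sliceIntegrand s.centre (interp s.lower (16 - t) t) (interp s.width (16 - t) t)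
    (interp s.gap (16 - t) t) κ

/-- The Newton–Cotes cubature sum of `s.integrand` over `[0, 16] × [0, 16]`. -/
def Strip.cubatureSum (s : Strip R) : R :=
  newtonCotesSum fun j => newtonCotesSum fun k => s.integrand j k

theorem Strip.map_integrand (φ : R →+* S) (s : Strip R) (t κ : R) :
    φ (s.integrand t κ) = (s.map φ).integrand (φ t) (φ κ) := by
  simp only [Strip.integrand, Strip.map, sliceIntegrand, map_interp, map_sliceWeight,
    map_invSqTaylor, map_mul, map_add, map_sub, map_ofNat]

theorem Strip.map_cubatureSum (φ : R →+* S) (s : Strip R) :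
    φ s.cubatureSum = (s.map φ).cubatureSum := by
  simp only [Strip.cubatureSum, map_newtonCotesSum, Strip.map_integrand, map_natCast]

end CommRing

variable (s : Strip ℝ)

theorem natDegree_sixteen_sub_le {p : ℝ[X]} {n : ℕ} (hp : p.natDegree ≤ n) :
    (16 - p).natDegree ≤ n :=
  (natDegree_sub_le_of_le ((natDegree_ofNat 16).trans_le n.zero_le) hp).trans_eq (max_self n)

theorem natDegree_interp_le {p : ℝ × ℝ} {t : ℝ[X]} {n : ℕ} (ht : t.natDegree ≤ n) :
    (interp (p.map C C) (16 - t) t).natDegree ≤ n :=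
  natDegree_add_le_of_degree_le
    ((natDegree_mul_C_le _ _).trans (natDegree_sixteen_sub_le ht))
    ((natDegree_mul_C_le _ _).trans ht)

theorem natDegree_sliceIntegrand_le (η : ℝ) {c d g κ : ℝ[X]} {m n : ℕ} (hmn : m + n ≤ 1)
    (hc : c.natDegree ≤ m) (hd : d.natDegree ≤ m) (hg : g.natDegree ≤ m) (hκ : κ.natDegree ≤ n) :
    (sliceIntegrand (C η) c d g κ).natDegree ≤ 16 := by
  have hofNat {p : ℝ[X]} (hp : p.natDegree ≤ m) : (16 * p).natDegree ≤ m + n :=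
    natDegree_mul_le_of_le (natDegree_ofNat 16).le hp |>.trans (by omega)
  have hgap : (16 * g + (16 - κ) * d).natDegree ≤ m + n :=
    natDegree_add_le_of_degree_le (hofNat hg)
      ((natDegree_mul_le_of_le (natDegree_sixteen_sub_le hκ) hd).trans_eq (add_comm n m))
  have hy : (16 * c + κ * d).natDegree ≤ 1 :=
    (natDegree_add_le_of_degree_le (hofNat hc)
      ((natDegree_mul_le_of_le hκ hd).trans_eq (add_comm n m))).trans hmn
  have hweight : (sliceWeight d g (16 - κ) κ).natDegree ≤ 3 * m + 2 * n + 2 * (m + n) :=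
    natDegree_mul_le_of_le
      (natDegree_mul_le_of_le (natDegree_pow_le_of_le 3 hd) (natDegree_pow_le_of_le 2 hκ))
      (natDegree_pow_le_of_le 2 hgap)
  exact (natDegree_mul_le_of_le hweight (natDegree_invSqTaylor_le η hy 12)).trans (by omega)

theorem Strip.natDegree_integrand_le {t κ : ℝ[X]} {m n : ℕ} (hmn : m + n ≤ 1)
    (ht : t.natDegree ≤ m) (hκ : κ.natDegree ≤ n) :
    ((s.map C).integrand t κ).natDegree ≤ 16 :=
  natDegree_sliceIntegrand_le s.centre hmn (natDegree_interp_le ht) (natDegree_interp_le ht)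
    (natDegree_interp_le ht) hκ

theorem Strip.eval_integrand (t κ : ℝ[X]) (x : ℝ) :
    ((s.map C).integrand t κ).eval x = s.integrand (t.eval x) (κ.eval x) := by
  have hs : (s.map C).map (evalRingHom x) = s := by
    obtain ⟨η, ⟨_, _⟩, ⟨_, _⟩, ⟨_, _⟩⟩ := s
    simp [Strip.map]
  rw [← coe_evalRingHom, Strip.map_integrand, hs]

theorem Strip.integral_integrand (t : ℝ) :
    ∫ κ in (0 : ℝ)..16, s.integrand t κ =
      newtonCotesSum (fun k => s.integrand t k) / 488462349375 := by
  have hdeg : ((s.map C).integrand (C t) X).natDegree < 17 :=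
    Nat.lt_succ_of_le (s.natDegree_integrand_le (zero_add 1).le (natDegree_C t).le natDegree_X_le)
  simpa only [Strip.eval_integrand, eval_C, eval_X] using integral_eval_eq_newtonCotesSum hdeg

theorem Strip.eval_newtonCotesSum_integrand (t : ℝ) :
    (newtonCotesSum fun k => (s.map C).integrand X (k : ℝ[X])).eval t =
      newtonCotesSum fun k => s.integrand t k := by
  rw [← coe_evalRingHom, map_newtonCotesSum]
  simp only [coe_evalRingHom, Strip.eval_integrand, eval_X, eval_natCast]

theorem Strip.integral_integral_integrand :
    ∫ t in (0 : ℝ)..16, ∫ κ in (0 : ℝ)..16, s.integrand t κ =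
      s.cubatureSum / 488462349375 ^ 2 := by
  have hdeg : (newtonCotesSum fun k => (s.map C).integrand X (k : ℝ[X])).natDegree < 17 :=
    Nat.lt_succ_of_le <| natDegree_newtonCotesSum_le fun k _ =>
      s.natDegree_integrand_le (add_zero 1).le natDegree_X_le (natDegree_natCast k).le
  have h := integral_eval_eq_newtonCotesSum hdeg
  simp only [Strip.eval_newtonCotesSum_integrand] at h
  simp only [Strip.integral_integrand, intervalIntegral.integral_div, h, Strip.cubatureSum]
  rw [div_div, ← sq]

theorem Strip.continuous_integral_integrand :
    Continuous fun t => ∫ κ in (0 : ℝ)..16, s.integrand t κ := by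
  simp only [Strip.integral_integrand, ← Strip.eval_newtonCotesSum_integrand]
  fun_prop

end Strip

section Slice

/-- The contribution to the squared norm of one vertical slice of the domain: the slice runs from
`c` to `e`, and the test function on it vanishes at `s` and `c`. -/
def sliceIntegral (s c e : ℝ) : ℝ :=
  ∫ y in c..e, ((y - s) * (y - c)) ^ 2 / y ^ 2

theorem sliceIntegral_nonneg {s c e : ℝ} (hce : c ≤ e) : 0 ≤ sliceIntegral s c e :=
  intervalIntegral.integral_nonneg hce fun _ _ => by positivity

theorem intervalIntegrable_slice (s c : ℝ) {u v : ℝ} (hu : 0 < u) (huv : u ≤ v) :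
    IntervalIntegrable (fun y => ((y - s) * (y - c)) ^ 2 / y ^ 2) MeasureTheory.volume u v := by
  refine ContinuousOn.intervalIntegrable_of_Icc huv ?_
  have hne : ∀ y ∈ Set.Icc u v, y ^ 2 ≠ 0 := fun y hy => (pow_pos (hu.trans_le hy.1) 2).ne'
  fun_prop (disch := assumption)

theorem sliceIntegral_mono {s s' c c' e e' : ℝ} (hc : 0 < c) (hcc' : c ≤ c') (hce' : c' ≤ e')
    (hee' : e' ≤ e) (hes' : e' ≤ s') (hss' : s' ≤ s) :
    sliceIntegral s' c' e' ≤ sliceIntegral s c e := by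
  have hc' : 0 < c' := hc.trans_le hcc'
  have hpointwise : sliceIntegral s' c' e' ≤ ∫ y in c'..e', ((y - s) * (y - c)) ^ 2 / y ^ 2 := by
    refine intervalIntegral.integral_mono_on hce' (intervalIntegrable_slice s' c' hc' hce')
      (intervalIntegrable_slice s c hc' hce') fun y hy => ?_
    have hs : (s' - y) ^ 2 ≤ (s - y) ^ 2 :=
      pow_le_pow_left₀ (by linarith [hy.2]) (by linarith) 2
    have hc : (y - c') ^ 2 ≤ (y - c) ^ 2 :=
      pow_le_pow_left₀ (by linarith [hy.1]) (by linarith) 2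
    rw [mul_pow, mul_pow, ← neg_sub s' y, ← neg_sub s y, neg_sq, neg_sq]
    gcongr
  refine hpointwise.trans (intervalIntegral.integral_mono_interval hcc' hce' hee'
    (Filter.Eventually.of_forall fun y => by positivity)
    (intervalIntegrable_slice s c hc ?_))
  linarith

theorem integral_sliceIntegrand_le_sliceIntegral {η c d g L : ℝ} (hη : 0 < η) (hc : 0 < c)
    (hd : 0 ≤ d) (hL : 0 < L) :
    (∫ κ in (0 : ℝ)..16, sliceIntegrand η c d g κ) / (L ^ 3 * η ^ 13) ≤
      sliceIntegral (16 * (c + d + g) / L) (16 * c / L) (16 * (c + d) / L) := by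
  let y (κ : ℝ) : ℝ := 16 * c / L + d / L * κ
  let f (y : ℝ) : ℝ := ((y - 16 * (c + d + g) / L) * (y - 16 * c / L)) ^ 2 / y ^ 2
  have hsubst : sliceIntegral (16 * (c + d + g) / L) (16 * c / L) (16 * (c + d) / L) =
      ∫ κ in (0 : ℝ)..16, d / L * f (y κ) := by
    rw [intervalIntegral.integral_const_mul, ← smul_eq_mul (d / L),
      intervalIntegral.smul_integral_comp_add_mul f, sliceIntegral]
    congr 1 <;> ring
  have hpos {κ : ℝ} (hκ : κ ∈ Set.Icc 0 16) : 0 < 16 * c + κ * d :=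
    add_pos_of_pos_of_nonneg (by positivity) (mul_nonneg hκ.1 hd)
  have hy {κ : ℝ} : y κ = (16 * c + κ * d) / L := by ring
  rw [hsubst, ← intervalIntegral.integral_div]
  refine intervalIntegral.integral_mono_on (by norm_num) ?_ ?_ fun κ hκ => ?_
  · refine Continuous.intervalIntegrable (Continuous.div_const (Continuous.mul ?_ ?_) _) _ _
    · simp only [sliceWeight]
      fun_prop
    · exact (continuous_invSqTaylor η 12).comp (by fun_prop)
  · refine ContinuousOn.intervalIntegrable_of_Icc (by norm_num) ?_
    have hne : ∀ κ ∈ Set.Icc (0 : ℝ) 16, ((16 * c + κ * d) / L) ^ 2 ≠ 0 :=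
      fun κ hκ => pow_ne_zero 2 (div_pos (hpos hκ) hL).ne'
    simp only [f, hy]
    fun_prop (disch := assumption)
  · have htaylor := invSqTaylor_div_le hη (hpos hκ) (show Even 12 by decide)
    calc sliceIntegrand η c d g κ / (L ^ 3 * η ^ 13)
        = sliceWeight d g (16 - κ) κ / L ^ 3 *
            (invSqTaylor η (16 * c + κ * d) 12 / η ^ 13) := mul_div_mul_comm ..
      _ ≤ sliceWeight d g (16 - κ) κ / L ^ 3 * (1 / (16 * c + κ * d) ^ 2) := by
          have : 0 ≤ sliceWeight d g (16 - κ) κ := by unfold sliceWeight; positivity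
          gcongr
      _ = d / L * f (y κ) := by
          have := (hpos hκ).ne'
          simp only [f, hy, sliceWeight]
          field_simp
          ring

end Slice

section Chord

variable {a b p q x₀ x₁ : ℝ}

theorem sq_convexComb_add (hab : a + b = 1) :
    (a * p + b * q) ^ 2 + a * b * (p - q) ^ 2 = a * p ^ 2 + b * q ^ 2 := by
  linear_combination (a * p ^ 2 + b * q ^ 2) * hab

theorem sq_convexComb_le (ha : 0 ≤ a) (hb : 0 ≤ b) (hab : a + b = 1) :
    (a * p + b * q) ^ 2 ≤ a * p ^ 2 + b * q ^ 2 := by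
  have : 0 ≤ a * b * (p - q) ^ 2 := by positivity
  linarith [sq_convexComb_add (p := p) (q := q) hab]

theorem convexComb_le_sqrt {A B F : ℝ} (ha : 0 ≤ a) (hb : 0 ≤ b) (hab : a + b = 1)
    (hp : p ^ 2 ≤ A) (hq : q ^ 2 ≤ B) (hF : a * A + b * B ≤ F) : a * p + b * q ≤ √F :=
  Real.le_sqrt_of_sq_le <|
    calc (a * p + b * q) ^ 2 ≤ a * p ^ 2 + b * q ^ 2 := sq_convexComb_le ha hb hab
      _ ≤ a * A + b * B := by gcongr
      _ ≤ F := hF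

-- The chord of two points of the concave curve `√(Q - x ^ 2)` lies below it; raising the squares of
-- the end values by `ε` puts it above.
theorem sqrt_sub_sq_le_convexComb {Q ε : ℝ} (ha : 0 ≤ a) (hb : 0 ≤ b) (hab : a + b = 1)
    (hp : 0 ≤ p) (hq : 0 ≤ q) (hp' : Q + ε ≤ p ^ 2 + x₀ ^ 2) (hq' : Q + ε ≤ q ^ 2 + x₁ ^ 2)
    (hε : (x₀ - x₁) ^ 2 + (p - q) ^ 2 ≤ 4 * ε) :
    √(Q - (a * x₀ + b * x₁) ^ 2) ≤ a * p + b * q := by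
  have hε0 : 0 ≤ ε := by nlinarith [sq_nonneg (x₀ - x₁), sq_nonneg (p - q)]
  have hab4 : 4 * (a * b) ≤ 1 := by nlinarith [sq_nonneg (a - b)]
  have hdefect : a * b * ((x₀ - x₁) ^ 2 + (p - q) ^ 2) ≤ ε :=
    calc a * b * ((x₀ - x₁) ^ 2 + (p - q) ^ 2)
        ≤ a * b * (4 * ε) := by gcongr
      _ = 4 * (a * b) * ε := by ring
      _ ≤ ε := mul_le_of_le_one_left hε0 hab4
  have hends : Q + ε ≤ a * (p ^ 2 + x₀ ^ 2) + b * (q ^ 2 + x₁ ^ 2) := by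
    nlinarith [mul_le_mul_of_nonneg_left hp' ha, mul_le_mul_of_nonneg_left hq' hb]
  refine Real.sqrt_le_iff.mpr ⟨by positivity, ?_⟩
  linarith [sq_convexComb_add (p := p) (q := q) hab, sq_convexComb_add (p := x₀) (q := x₁) hab]

/-- The squared norm of the test function on the vertical line through `x`, for a domain bounded
by `y = √(Q - x ^ 2)` and `y = √(1 - m * x - x ^ 2)`. -/
def sliceNormSq (Q m x : ℝ) : ℝ :=
  sliceIntegral (√(1 - 22 * x ^ 2) + 1) (√(Q - x ^ 2)) (√(1 - m * x - x ^ 2))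

/-- The values `p ≤ e ≤ s` at `x` are end values of chords that bound `sliceNormSq` from below:
`e` and `s` lie below the upper curve and the second zero of the test function, and `p` lies above
the lower curve by a margin `ε` that makes up for its concavity. -/
structure IsInnerNode (Q m ε x p e s : ℝ) : Prop where
  pos : 0 < p
  lower_le_upper : p ≤ e
  upper_le_zero : e ≤ s
  le_lower : Q + ε ≤ p ^ 2 + x ^ 2
  upper_le : e ^ 2 ≤ 1 - m * x - x ^ 2
  zero_le : (s - 1) ^ 2 ≤ 1 - 22 * x ^ 2

theorem IsInnerNode.sliceIntegral_convexComb_le {Q m ε p₀ e₀ s₀ p₁ e₁ s₁ : ℝ}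
    (h₀ : IsInnerNode Q m ε x₀ p₀ e₀ s₀) (h₁ : IsInnerNode Q m ε x₁ p₁ e₁ s₁)
    (hε : (x₀ - x₁) ^ 2 + (p₀ - p₁) ^ 2 ≤ 4 * ε) (ha : 0 ≤ a) (hb : 0 ≤ b) (hab : a + b = 1)
    (hQ : 0 < Q - (a * x₀ + b * x₁) ^ 2) :
    sliceIntegral (a * s₀ + b * s₁) (a * p₀ + b * p₁) (a * e₀ + b * e₁) ≤
      sliceNormSq Q m (a * x₀ + b * x₁) := by
  have hx : (a * x₀ + b * x₁) ^ 2 ≤ a * x₀ ^ 2 + b * x₁ ^ 2 := sq_convexComb_le ha hb hab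
  have hzero : a * (s₀ - 1) + b * (s₁ - 1) ≤ √(1 - 22 * (a * x₀ + b * x₁) ^ 2) :=
    convexComb_le_sqrt ha hb hab h₀.zero_le h₁.zero_le (by linarith)
  refine sliceIntegral_mono (Real.sqrt_pos.mpr hQ)
    (sqrt_sub_sq_le_convexComb ha hb hab h₀.pos.le h₁.pos.le h₀.le_lower h₁.le_lower hε)
    ?_ (convexComb_le_sqrt ha hb hab h₀.upper_le h₁.upper_le (by linarith)) ?_ (by linarith)
  · gcongr
    exacts [h₀.lower_le_upper, h₁.lower_le_upper]
  · gcongr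
    exacts [h₀.upper_le_zero, h₁.upper_le_zero]

end Chord

section Primitive

/-- The primitive of `y ↦ ((y - s) * (y - c)) ^ 2 / y ^ 2` obtained by expanding the square. -/
def slicePrimitive (s c y : ℝ) : ℝ :=
  y ^ 3 / 3 - (s + c) * y ^ 2 + ((s + c) ^ 2 + 2 * (s * c)) * y -
    2 * (s + c) * (s * c) * Real.log y - (s * c) ^ 2 * y⁻¹

theorem hasDerivAt_slicePrimitive (s c : ℝ) {y : ℝ} (hy : y ≠ 0) :
    HasDerivAt (slicePrimitive s c) (((y - s) * (y - c)) ^ 2 / y ^ 2) y := by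
  have h := ((((((hasDerivAt_pow 3 y).div_const 3).sub
    ((hasDerivAt_pow 2 y).const_mul (s + c))).add
    ((hasDerivAt_id y).const_mul ((s + c) ^ 2 + 2 * (s * c)))).sub
    ((Real.hasDerivAt_log hy).const_mul (2 * (s + c) * (s * c)))).sub
    ((hasDerivAt_inv hy).const_mul ((s * c) ^ 2)))
  refine h.congr_deriv ?_
  field_simp
  ring

theorem sliceIntegral_eq_sub (s : ℝ) {c e : ℝ} (hc : 0 < c) (hce : c ≤ e) :
    sliceIntegral s c e = slicePrimitive s c e - slicePrimitive s c c := by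
  refine intervalIntegral.integral_eq_sub_of_hasDerivAt
    (fun y hy => hasDerivAt_slicePrimitive s c ?_) (intervalIntegrable_slice s c hc hce)
  rw [Set.uIcc_of_le hce] at hy
  exact (hc.trans_le hy.1).ne'

theorem continuousOn_slicePrimitive {S : Set ℝ} {s c y : ℝ → ℝ} (hs : ContinuousOn s S)
    (hc : ContinuousOn c S) (hy : ContinuousOn y S) (hy0 : ∀ x ∈ S, y x ≠ 0) :
    ContinuousOn (fun x => slicePrimitive (s x) (c x) (y x)) S := by
  simp only [slicePrimitive]
  fun_prop (disch := assumption)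

theorem continuousOn_sliceNormSq {Q m : ℝ} {S : Set ℝ} (hQ : ∀ x ∈ S, 0 < Q - x ^ 2)
    (hm : ∀ x ∈ S, Q ≤ 1 - m * x) : ContinuousOn (sliceNormSq Q m) S := by
  have hc : ∀ x ∈ S, 0 < √(Q - x ^ 2) := fun x hx => Real.sqrt_pos.mpr (hQ x hx)
  have hce : ∀ x ∈ S, √(Q - x ^ 2) ≤ √(1 - m * x - x ^ 2) := fun x hx =>
    Real.sqrt_le_sqrt (by linarith [hm x hx])
  refine ContinuousOn.congr ?_ fun x hx => sliceIntegral_eq_sub _ (hc x hx) (hce x hx)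
  refine (continuousOn_slicePrimitive ?_ ?_ ?_ fun x hx => ((hc x hx).trans_le (hce x hx)).ne').sub
    (continuousOn_slicePrimitive ?_ ?_ ?_ fun x hx => (hc x hx).ne') <;> fun_prop

end Primitive

section StripIntegral

theorem interp_pos {R : Type*} [CommSemiring R] [PartialOrder R] [IsStrictOrderedRing R]
    {p : R × R} {t' t : R} (ht' : 0 ≤ t') (ht : 0 ≤ t) (htt : 0 < t' + t) (h₁ : 0 < p.1)
    (h₂ : 0 < p.2) : 0 < interp p t' t := by
  unfold interp
  rcases ht.eq_or_lt with rfl | ht0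
  · rw [zero_mul, add_zero]
    exact mul_pos (by simpa only [add_zero] using htt) h₁
  · exact add_pos_of_nonneg_of_pos (mul_nonneg ht' h₁.le) (mul_pos ht0 h₂)

/-- `sliceIntegral` along the vertical segment of `s` with horizontal coordinate `t`, the unit of
the entries of `s` other than `centre` being `256 / L`. -/
def Strip.sliceIntegral (s : Strip ℝ) (L t : ℝ) : ℝ :=
  let c := interp s.lower (16 - t) t
  let d := interp s.width (16 - t) t
  let g := interp s.gap (16 - t) t
  Bolza.sliceIntegral (16 * (c + d + g) / L) (16 * c / L) (16 * (c + d) / L)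

theorem Strip.cubatureSum_le_integral {s : Strip ℝ} {G : ℝ → ℝ} {x₀ h L : ℝ} (hh : 0 ≤ h)
    (hL : 0 < L) (hη : 0 < s.centre) (hlower : 0 < s.lower.1 ∧ 0 < s.lower.2)
    (hwidth : 0 ≤ s.width.1 ∧ 0 ≤ s.width.2)
    (hG : ContinuousOn G (Set.Icc x₀ (x₀ + h)))
    (hle : ∀ t ∈ Set.Icc (0 : ℝ) 16, s.sliceIntegral L t ≤ G (x₀ + h / 16 * t)) :
    h / (16 * 488462349375 ^ 2 * L ^ 3) * (s.cubatureSum / s.centre ^ 13) ≤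
      ∫ x in x₀..(x₀ + h), G x := by
  have hbound : ∀ t ∈ Set.Icc (0 : ℝ) 16,
      (∫ κ in (0 : ℝ)..16, s.integrand t κ) / (L ^ 3 * s.centre ^ 13) ≤ G (x₀ + h / 16 * t) :=
    fun t ht =>
      have ht' : 0 ≤ 16 - t := sub_nonneg.mpr ht.2
      (integral_sliceIntegrand_le_sliceIntegral hη
        (interp_pos ht' ht.1 (by norm_num) hlower.1 hlower.2)
        (add_nonneg (mul_nonneg ht' hwidth.1) (mul_nonneg ht.1 hwidth.2)) hL).trans (hle t ht)
  have hsubst : h / 16 * ∫ t in (0 : ℝ)..16, G (x₀ + h / 16 * t) = ∫ x in x₀..(x₀ + h), G x := by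
    rw [← smul_eq_mul, intervalIntegral.smul_integral_comp_add_mul G]
    congr 1 <;> ring
  have hG' : IntervalIntegrable (fun t => G (x₀ + h / 16 * t)) MeasureTheory.volume 0 16 := by
    refine (hG.comp (by fun_prop) fun t ht => ?_).intervalIntegrable_of_Icc (by norm_num)
    exact ⟨by nlinarith [ht.1], by nlinarith [ht.2]⟩
  calc h / (16 * 488462349375 ^ 2 * L ^ 3) * (s.cubatureSum / s.centre ^ 13)
      = h / 16 * ∫ t in (0 : ℝ)..16,
          (∫ κ in (0 : ℝ)..16, s.integrand t κ) / (L ^ 3 * s.centre ^ 13) := by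
        rw [intervalIntegral.integral_div, Strip.integral_integral_integrand]
        ring
    _ ≤ h / 16 * ∫ t in (0 : ℝ)..16, G (x₀ + h / 16 * t) := by
        gcongr
        exact intervalIntegral.integral_mono_on (by norm_num)
          ((s.continuous_integral_integrand.div_const _).intervalIntegrable _ _) hG' hbound
    _ = ∫ x in x₀..(x₀ + h), G x := hsubst

end StripIntegral

section Mesh

/-- In units of `10 ^ (-7)`, a value above `√(Q + ε - x ^ 2)` at `x = 3 * i / 2000`, where
`0.08642724` bounds `Q` from above and `ε = 9.54 * 10 ^ (-7)` is the margin in `IsInnerNode`. -/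
def lowerNode (i : ℕ) : ℕ :=
  Nat.sqrt (8642724 * 10 ^ 6 + 954 * 10 ^ 5 - (15000 * i) ^ 2) + 1

/-- In units of `10 ^ (-7)`, a value below `√(1 - m * x - x ^ 2)` at `x = 3 * i / 2000`, where
`4.8284272` bounds `m` from above. -/
def upperNode (i : ℕ) : ℕ :=
  Nat.sqrt (10 ^ 14 - 48284272 * (15000 * i) - (15000 * i) ^ 2)

/-- In units of `10 ^ (-7)`, a value below the zero `1 + √(1 - 22 * x ^ 2)` of the test function
at `x = 3 * i / 2000`. -/
def zeroNode (i : ℕ) : ℕ :=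
  10 ^ 7 + Nat.sqrt (10 ^ 14 - 22 * (15000 * i) ^ 2)

/-- The strip between the `i`-th and the next node, in units of `10 ^ (-7)`; the centre is chosen
to make the loss in the Taylor expansion small, and odd because the kernel hashes a number by its
low-order bits, which would be zero for many powers of an even number. -/
def nodeStrip (i : ℕ) : Strip ℕ where
  centre := 256 * ((2 * lowerNode i + 3 * upperNode i) / 5) + 1
  lower := (lowerNode i, lowerNode (i + 1))
  width := (upperNode i - lowerNode i, upperNode (i + 1) - lowerNode (i + 1))
  gap := (zeroNode i - upperNode i, zeroNode (i + 1) - upperNode (i + 1))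

/-- `Strip.integrand` at the nodes of the cubature, in a form that the kernel evaluates fast:
everything but the sign is computed in `ℕ`, without truncation for `j, k ≤ 16`, and `invSqTaylor`
is obtained from `invSqTaylor_mul_sq` by an exact division. -/
def Strip.natIntegrand (s : Strip ℕ) (j k : ℕ) : ℤ :=
  let d := interp s.width (16 - j) j
  let y := 16 * interp s.lower (16 - j) j + k * d
  (sliceWeight d (interp s.gap (16 - j) j) (16 - k) k : ℕ) *
    (Int.subNatNat (s.centre ^ 13)
      ((s.centre ^ 2 + y ^ 2 - 2 * s.centre * y) ^ 6 * (s.centre + 12 * y)) / (y ^ 2 : ℕ))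

/-- `Strip.cubatureSum` computed from `Strip.natIntegrand`, with the operations of `ℤ` in place of
the generic ones in `newtonCotesSum`. -/
def Strip.natCubatureSum (s : Strip ℕ) : ℤ :=
  (newtonCotes.map fun p =>
    p.2 * (newtonCotes.map fun q => q.2 * s.natIntegrand p.1 q.1).sum).sum

/-- The integer part of the cubature value of the `i`-th strip, as a multiple of
`3 / 2000 / (16 * 488462349375 ^ 2 * 2560000000 ^ 3)`. -/
def nodeStripValue (i : ℕ) : ℤ :=
  (nodeStrip i).natCubatureSum / (nodeStrip i).centre ^ 13

theorem Strip.natIntegrand_eq {s : Strip ℕ} (h₁ : 0 < s.lower.1) (h₂ : 0 < s.lower.2) {j k : ℕ}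
    (hj : j ≤ 16) (hk : k ≤ 16) :
    s.natIntegrand j k = (s.map (Nat.cast : ℕ → ℤ)).integrand j k := by
  have hinterp (p : ℕ × ℕ) :
      ((interp p (16 - j) j : ℕ) : ℤ) = interp (p.map Nat.cast Nat.cast) (16 - j : ℤ) j := by
    simp [interp, hj]
  have hweight (d g : ℕ) :
      ((sliceWeight d g (16 - k) k : ℕ) : ℤ) = sliceWeight (d : ℤ) g (16 - k) k := by
    simp [sliceWeight, hk]
  have htaylor {y : ℕ} (hy : 0 < y) : Int.subNatNat (s.centre ^ 13)
      ((s.centre ^ 2 + y ^ 2 - 2 * s.centre * y) ^ 6 * (s.centre + 12 * y)) / (y ^ 2 : ℕ) =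
      invSqTaylor (s.centre : ℤ) y 12 := by
    refine Int.ediv_eq_of_eq_mul_left (by positivity) ?_
    rw [Int.subNatNat_eq_coe]
    push_cast [two_mul_le_add_sq s.centre y, invSqTaylor_mul_sq]
    ring
  have hy : 0 < 16 * interp s.lower (16 - j) j + k * interp s.width (16 - j) j :=
    Nat.add_pos_left (Nat.mul_pos (by norm_num)
      (interp_pos (Nat.zero_le _) (Nat.zero_le _) (by omega) h₁ h₂)) _
  simp only [Strip.natIntegrand, Strip.integrand, Strip.map, sliceIntegrand]
  rw [hweight, htaylor hy]
  push_cast [hinterp]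
  rfl

theorem Strip.natCubatureSum_eq {s : Strip ℕ} (h₁ : 0 < s.lower.1) (h₂ : 0 < s.lower.2) :
    s.natCubatureSum = (s.map (Nat.cast : ℕ → ℝ)).cubatureSum := by
  have hint : s.natCubatureSum = (s.map (Nat.cast : ℕ → ℤ)).cubatureSum :=
    newtonCotesSum_congr fun j hj => newtonCotesSum_congr fun k hk =>
      s.natIntegrand_eq h₁ h₂ hj hk
  have hmap : (s.map (Nat.cast : ℕ → ℤ)).map (Int.castRingHom ℝ) = s.map Nat.cast := by
    simp [Strip.map, Prod.map_map, Function.comp_def]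
  rw [hint, ← hmap, ← Strip.map_cubatureSum, eq_intCast]

/-- The abscissa of the `i`-th node. -/
def meshPoint (i : ℕ) : ℝ :=
  3 * i / 2000

theorem meshPoint_succ (i : ℕ) : meshPoint (i + 1) = meshPoint i + 3 / 2000 := by
  unfold meshPoint
  push_cast
  ring

theorem node_bounds : ∀ i < 127, lowerNode i ≤ upperNode i ∧ upperNode i ≤ zeroNode i ∧
    8642724 * 10 ^ 6 + 954 * 10 ^ 5 ≤ lowerNode i ^ 2 + (15000 * i) ^ 2 ∧
    upperNode i ^ 2 + 48284272 * (15000 * i) + (15000 * i) ^ 2 ≤ 10 ^ 14 ∧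
    ((zeroNode i : ℤ) - 10 ^ 7) ^ 2 + 22 * (15000 * i) ^ 2 ≤ 10 ^ 14 := by
  decide +kernel

theorem lowerNode_sub_sq_le : ∀ i < 126,
    15000 ^ 2 + lowerNode i ^ 2 + lowerNode (i + 1) ^ 2 ≤
      4 * (954 * 10 ^ 5) + 2 * lowerNode i * lowerNode (i + 1) := by
  decide +kernel

theorem isInnerNode_meshPoint {Q m : ℝ} (hQ : Q ≤ 8642724 / 10 ^ 8) (hm : m ≤ 48284272 / 10 ^ 7)
    {i : ℕ} (hi : i < 127) :
    IsInnerNode Q m (954 / 10 ^ 9) (meshPoint i) (lowerNode i / 10 ^ 7) (upperNode i / 10 ^ 7)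
      (zeroNode i / 10 ^ 7) := by
  obtain ⟨hle, hle', hl, hu, hz⟩ := node_bounds i hi
  have hl' : (8642724 * 10 ^ 6 + 954 * 10 ^ 5 : ℝ) ≤ lowerNode i ^ 2 + (15000 * i) ^ 2 := by
    exact_mod_cast hl
  have hu' : (upperNode i ^ 2 + 48284272 * (15000 * i) + (15000 * i) ^ 2 : ℝ) ≤ 10 ^ 14 := by
    exact_mod_cast hu
  have hz' : ((zeroNode i - 10 ^ 7) ^ 2 + 22 * (15000 * i) ^ 2 : ℝ) ≤ 10 ^ 14 := by
    exact_mod_cast hz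
  have hpos : (0 : ℝ) < lowerNode i := by exact_mod_cast Nat.succ_pos _
  unfold meshPoint
  constructor
  · positivity
  · gcongr
  · gcongr
  · linarith
  · have := mul_le_mul_of_nonneg_right hm (show (0 : ℝ) ≤ 3 * i / 2000 by positivity)
    linarith
  · linarith

theorem sliceIntegral_nodeStrip_le {Q m : ℝ} (hQ : Q ≤ 8642724 / 10 ^ 8)
    (hm : m ≤ 48284272 / 10 ^ 7) {i : ℕ} (hi : i < 126) {t : ℝ} (ht : t ∈ Set.Icc (0 : ℝ) 16)
    (hx : 0 < Q - (meshPoint i + 3 / 2000 / 16 * t) ^ 2) :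
    ((nodeStrip i).map Nat.cast).sliceIntegral 2560000000 t ≤
      sliceNormSq Q m (meshPoint i + 3 / 2000 / 16 * t) := by
  have h₀ := isInnerNode_meshPoint hQ hm (i := i) (by omega)
  have h₁ := isInnerNode_meshPoint hQ hm (i := i + 1) (by omega)
  have hslope : (meshPoint i - meshPoint (i + 1)) ^ 2 +
      ((lowerNode i : ℝ) / 10 ^ 7 - lowerNode (i + 1) / 10 ^ 7) ^ 2 ≤ 4 * (954 / 10 ^ 9) := by
    have : (15000 ^ 2 + lowerNode i ^ 2 + lowerNode (i + 1) ^ 2 : ℝ) ≤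
        4 * (954 * 10 ^ 5) + 2 * lowerNode i * lowerNode (i + 1) := by
      exact_mod_cast lowerNode_sub_sq_le i hi
    unfold meshPoint
    push_cast
    linarith
  have hconv : (16 - t) / 16 * meshPoint i + t / 16 * meshPoint (i + 1) =
      meshPoint i + 3 / 2000 / 16 * t := by
    unfold meshPoint
    push_cast
    ring
  have h := h₀.sliceIntegral_convexComb_le h₁ hslope (a := (16 - t) / 16) (b := t / 16)
    (by linarith [ht.2]) (by linarith [ht.1]) (by ring) (by rwa [hconv])
  rw [hconv] at h
  refine le_of_eq_of_le ?_ h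
  obtain ⟨hle₀, hle₀', -⟩ := node_bounds i (by omega)
  obtain ⟨hle₁, hle₁', -⟩ := node_bounds (i + 1) (by omega)
  simp only [Strip.sliceIntegral, Strip.map, nodeStrip, Prod.map, interp, Nat.cast_sub hle₀,
    Nat.cast_sub hle₀', Nat.cast_sub hle₁, Nat.cast_sub hle₁']
  congr 1 <;> ring

theorem lt_sum_nodeStripValue :
    28089 * (16 * 488462349375 ^ 2 * 2560000000 ^ 3) * 2000 <
      10 ^ 6 * 3 * ∑ i ∈ Finset.range 126, nodeStripValue i := by
  decide +kernel

theorem nodeStripValue_le_integral {Q m : ℝ} (hQ : Q ≤ 8642724 / 10 ^ 8)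
    (hm : m ≤ 48284272 / 10 ^ 7) {i : ℕ} (hi : i < 126)
    (hpos : ∀ x ∈ Set.Icc (meshPoint i) (meshPoint (i + 1)), 0 < Q - x ^ 2)
    (hle : ∀ x ∈ Set.Icc (meshPoint i) (meshPoint (i + 1)), Q ≤ 1 - m * x) :
    3 / 2000 / (16 * 488462349375 ^ 2 * 2560000000 ^ 3) * nodeStripValue i ≤
      ∫ x in (meshPoint i)..(meshPoint (i + 1)), sliceNormSq Q m x := by
  have hlower (j : ℕ) : 0 < lowerNode j := Nat.succ_pos _
  have hcentre : 0 < (nodeStrip i).centre := by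
    have := hlower i
    have := (node_bounds i (by omega)).1
    simp only [nodeStrip]
    omega
  have hdiv : (nodeStripValue i : ℝ) ≤
      (nodeStrip i).natCubatureSum / ((nodeStrip i).centre : ℝ) ^ 13 := by
    rw [le_div_iff₀ (by positivity)]
    exact_mod_cast Int.ediv_mul_le _ (pow_ne_zero 13 (Nat.cast_ne_zero.mpr hcentre.ne'))
  have h := Strip.cubatureSum_le_integral (s := (nodeStrip i).map Nat.cast) (G := sliceNormSq Q m)
    (x₀ := meshPoint i) (h := 3 / 2000) (L := 2560000000) (by norm_num) (by norm_num)
    (Nat.cast_pos.mpr hcentre) ⟨Nat.cast_pos.mpr (hlower i), Nat.cast_pos.mpr (hlower (i + 1))⟩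
    ⟨Nat.cast_nonneg _, Nat.cast_nonneg _⟩
  rw [← meshPoint_succ, ← Strip.natCubatureSum_eq (hlower i) (hlower (i + 1))] at h
  refine (mul_le_mul_of_nonneg_left hdiv (by positivity)).trans
    (h (continuousOn_sliceNormSq hpos hle) fun t ht => ?_)
  refine sliceIntegral_nodeStrip_le hQ hm hi ht (hpos _ ?_)
  rw [meshPoint_succ]
  constructor <;> linarith [ht.1, ht.2]

theorem sum_nodeStripValue_le_integral {Q m a : ℝ} (hQ : Q ≤ 8642724 / 10 ^ 8)
    (hm : m ≤ 48284272 / 10 ^ 7) (ha : 189 / 1000 ≤ a) (hpos : ∀ x ∈ Set.Icc 0 a, 0 < Q - x ^ 2)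
    (hle : ∀ x ∈ Set.Icc 0 a, Q ≤ 1 - m * x) :
    3 / 2000 / (16 * 488462349375 ^ 2 * 2560000000 ^ 3) *
        ((∑ i ∈ Finset.range 126, nodeStripValue i : ℤ) : ℝ) ≤
      ∫ x in (0 : ℝ)..(189 / 1000), sliceNormSq Q m x := by
  have hzero : meshPoint 0 = 0 := by norm_num [meshPoint]
  have hlast : meshPoint 126 = 189 / 1000 := by norm_num [meshPoint]
  have hmono : Monotone meshPoint :=
    monotone_nat_of_le_succ fun i => by rw [meshPoint_succ]; linarith
  have hmesh {i : ℕ} (hi : i < 126) :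
      Set.Icc (meshPoint i) (meshPoint (i + 1)) ⊆ Set.Icc 0 a :=
    Set.Icc_subset_Icc (hzero ▸ hmono i.zero_le) ((hmono hi).trans (hlast.trans_le ha))
  have hint : ∀ i < 126, IntervalIntegrable (sliceNormSq Q m) MeasureTheory.volume
      (meshPoint i) (meshPoint (i + 1)) := fun i hi =>
    ((continuousOn_sliceNormSq hpos hle).mono (hmesh hi)).intervalIntegrable_of_Icc
      (hmono i.le_succ)
  rw [Int.cast_sum, Finset.mul_sum, ← hzero, ← hlast,
    ← intervalIntegral.sum_integral_adjacent_intervals hint]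
  refine Finset.sum_le_sum fun i hi => ?_
  have hi := Finset.mem_range.mp hi
  exact nodeStripValue_le_integral hQ hm hi (fun x hx => hpos x (hmesh hi hx))
    fun x hx => hle x (hmesh hi hx)

theorem lt_integral_sliceNormSq {Q m a : ℝ} (hQ : Q ≤ 8642724 / 10 ^ 8)
    (hm : m ≤ 48284272 / 10 ^ 7) (ha : 189 / 1000 ≤ a) (hpos : ∀ x ∈ Set.Icc 0 a, 0 < Q - x ^ 2)
    (hle : ∀ x ∈ Set.Icc 0 a, Q ≤ 1 - m * x) :
    28089 / 10 ^ 6 < ∫ x in (0 : ℝ)..a, sliceNormSq Q m x := by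
  have hcert : (28089 / 10 ^ 6 : ℝ) < 3 / 2000 / (16 * 488462349375 ^ 2 * 2560000000 ^ 3) *
      ((∑ i ∈ Finset.range 126, nodeStripValue i : ℤ) : ℝ) := by
    have h := lt_sum_nodeStripValue
    -- Kept opaque, so that the following casts do not evaluate the sum.
    generalize ∑ i ∈ Finset.range 126, nodeStripValue i = n at h ⊢
    have h' : (28089 * (16 * 488462349375 ^ 2 * 2560000000 ^ 3) * 2000 : ℝ) < 10 ^ 6 * 3 * n := by
      exact_mod_cast h
    linarith
  have hnonneg : ∀ x ∈ Set.Ioc 0 a, 0 ≤ sliceNormSq Q m x := fun x hx =>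
    sliceIntegral_nonneg (Real.sqrt_le_sqrt (by linarith [hle x (Set.Ioc_subset_Icc_self hx)]))
  have hmono : ∫ x in (0 : ℝ)..(189 / 1000), sliceNormSq Q m x ≤
      ∫ x in (0 : ℝ)..a, sliceNormSq Q m x :=
    intervalIntegral.integral_mono_interval le_rfl (by norm_num) ha
      (MeasureTheory.ae_restrict_of_forall_mem measurableSet_Ioc hnonneg)
      ((continuousOn_sliceNormSq hpos hle).intervalIntegrable_of_Icc (by linarith))
  exact hcert.trans_le ((sum_nodeStripValue_le_integral hQ hm ha hpos hle).trans hmono)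

end Mesh

section Constants

theorem two_rpow_quarter_pow_four : ((2 : ℝ) ^ ((1 : ℝ) / 4)) ^ 4 = 2 := by
  rw [← Real.rpow_natCast, ← Real.rpow_mul zero_le_two]
  norm_num

theorem lt_two_rpow_quarter : (1189207115 / 10 ^ 9 : ℝ) < 2 ^ ((1 : ℝ) / 4) :=
  lt_of_pow_lt_pow_left₀ 4 (by positivity) (by rw [two_rpow_quarter_pow_four]; norm_num)

theorem two_rpow_quarter_lt : (2 : ℝ) ^ ((1 : ℝ) / 4) < 11892072 / 10 ^ 7 :=
  lt_of_pow_lt_pow_left₀ 4 (by positivity) (by rw [two_rpow_quarter_pow_four]; norm_num)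

theorem lt_sqrt_two : 141421356 / 10 ^ 8 < √2 :=
  Real.lt_sqrt_of_sq_lt (by norm_num)

theorem sqrt_two_lt : √2 < 14142136 / 10 ^ 7 := by
  rw [Real.sqrt_lt' (by norm_num)]
  norm_num

theorem sqrt_two_eq_rpow_quarter_sq : √2 = ((2 : ℝ) ^ ((1 : ℝ) / 4)) ^ 2 := by
  rw [Real.sqrt_eq_iff_mul_self_eq zero_le_two (by positivity)]
  linear_combination -two_rpow_quarter_pow_four

theorem sqrt_four_add_three_mul_sqrt_two :
    √(4 + 3 * √2) = (2 : ℝ) ^ ((1 : ℝ) / 4) + ((2 : ℝ) ^ ((1 : ℝ) / 4)) ^ 3 := by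
  rw [Real.sqrt_eq_iff_mul_self_eq (by positivity) (by positivity), sqrt_two_eq_rpow_quarter_sq]
  linear_combination -(2 + ((2 : ℝ) ^ ((1 : ℝ) / 4)) ^ 2) * two_rpow_quarter_pow_four

theorem radicand_eq_one_sub :
    3 + 2 * √2 - 2 * √(4 + 3 * √2) = 1 - 2 * (1 + √2) * ((2 : ℝ) ^ ((1 : ℝ) / 4) - 1) := by
  rw [sqrt_four_add_three_mul_sqrt_two, sqrt_two_eq_rpow_quarter_sq]
  ring

theorem le_radicand : 864 / 10 ^ 4 ≤ 3 + 2 * √2 - 2 * √(4 + 3 * √2) := by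
  rw [radicand_eq_one_sub]
  nlinarith [sqrt_two_lt, two_rpow_quarter_lt, lt_two_rpow_quarter]

theorem radicand_le : 3 + 2 * √2 - 2 * √(4 + 3 * √2) ≤ 8642724 / 10 ^ 8 := by
  rw [radicand_eq_one_sub]
  nlinarith [lt_sqrt_two, lt_two_rpow_quarter]

theorem cos_pi_div_eight_div_sin_pi_div_eight :
    Real.cos (Real.pi / 8) / Real.sin (Real.pi / 8) = 1 + √2 := by
  have hsqrt : √2 ^ 2 = 2 := Real.sq_sqrt zero_le_two
  have hlt : √2 < 2 := sqrt_two_lt.trans (by norm_num)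
  have hsin : 0 < √(2 - √2) := Real.sqrt_pos.mpr (sub_pos.mpr hlt)
  have hcos : √(2 + √2) = (1 + √2) * √(2 - √2) := by
    rw [Real.sqrt_eq_iff_mul_self_eq (by positivity) (by positivity), mul_mul_mul_comm,
      Real.mul_self_sqrt (by linarith)]
    linear_combination √2 * hsqrt
  rw [Real.sin_pi_div_eight, Real.cos_pi_div_eight, div_div_div_cancel_right₀ two_ne_zero, hcos,
    mul_div_cancel_right₀ _ hsin.ne']

theorem one_div_sin_sq_sub_sq {θ : ℝ} (hθ : Real.sin θ ≠ 0) (x : ℝ) :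
    (1 / Real.sin θ) ^ 2 - (x + Real.cos θ / Real.sin θ) ^ 2 =
      1 - 2 * (Real.cos θ / Real.sin θ) * x - x ^ 2 := by
  field_simp
  linear_combination -Real.sin_sq_add_cos_sq θ

end Constants

end

end Bolza

open Bolza in
/-- Lower bound `‖φ₁‖² > 28089/10⁶` for the squared hyperbolic `L²` norm of the
test function `φ₁(x,y) = (y − √(1−22x²) − 1)(y − √(q²−x²))` over the hyperbolic
(2,4,8) triangle `Ω_T` in the upper half-plane (Section 3.3 of the paper). -/
theorem bolza_test_function_norm_lower_bound
    (q a : ℝ)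
    (hq : q = Real.sqrt (3 + 2 * Real.sqrt 2 - 2 * Real.sqrt (4 + 3 * Real.sqrt 2)))
    (ha : a = (2 : ℝ) ^ ((1 : ℝ) / 4) - 1)
    (c₁ c₂ : ℝ → ℝ)
    (hc₁ : ∀ x : ℝ, c₁ x = Real.sqrt (q ^ 2 - x ^ 2))
    (hc₂ : ∀ x : ℝ, c₂ x = Real.sqrt ((1 / Real.sin (Real.pi / 8)) ^ 2 -
        (x + Real.cos (Real.pi / 8) / Real.sin (Real.pi / 8)) ^ 2))
    (φ₁ : ℝ → ℝ → ℝ)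
    (hφ₁ : ∀ x y : ℝ, φ₁ x y =
      (y - Real.sqrt (1 - 22 * x ^ 2) - 1) * (y - Real.sqrt (q ^ 2 - x ^ 2))) :
    28089 / 1000000 <
      ∫ x in (0 : ℝ)..a, ∫ y in (c₁ x)..(c₂ x), (φ₁ x y) ^ 2 / y ^ 2 := by
  have hq_sq : q ^ 2 = 3 + 2 * √2 - 2 * √(4 + 3 * √2) := by
    rw [hq, Real.sq_sqrt (le_trans (by norm_num) le_radicand)]
  have hsin : Real.sin (Real.pi / 8) ≠ 0 :=
    (Real.sin_pos_of_pos_of_lt_pi (by positivity) (by linarith [Real.pi_pos])).ne'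
  have hslice (x : ℝ) : ∫ y in (c₁ x)..(c₂ x), (φ₁ x y) ^ 2 / y ^ 2 =
      sliceNormSq (q ^ 2) (2 * (1 + √2)) x := by
    rw [hc₁, hc₂, one_div_sin_sq_sub_sq hsin, cos_pi_div_eight_div_sin_pi_div_eight]
    simp only [hφ₁, sub_sub _ _ (1 : ℝ), sliceNormSq, sliceIntegral]
  have hpos : ∀ x ∈ Set.Icc 0 a, 0 < q ^ 2 - x ^ 2 := fun x hx => by
    nlinarith [hx.1, hx.2, two_rpow_quarter_lt, le_radicand]
  have hle : ∀ x ∈ Set.Icc 0 a, q ^ 2 ≤ 1 - 2 * (1 + √2) * x := fun x hx => by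
    rw [hq_sq, radicand_eq_one_sub, ← ha]
    gcongr
    exact hx.2
  have h := lt_integral_sliceNormSq (hq_sq.trans_le radicand_le)
    (by linarith [sqrt_two_lt]) (by linarith [lt_two_rpow_quarter]) hpos hle
  norm_num only at h ⊢
  simpa only [hslice] using h
end
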